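/- Let n ≥ 2, δ > 0, R₁ > 0, and set Ω = { x ∈ ℝⁿ : |x| > R₁ }. Let V : Ω → ℝ be a smooth potential of symbolic decay order −δ: for every multi-index α there is a constant C_α such that |∂^α V(x)| ≤ C_α (1+|x|)^{−δ−|α|} for all x ∈ Ω. Let λ > 0 and let ψ : Ω → ℂ be smooth with ∫_{Ω} |ψ|² < ∞ and −Δψ + Vψ = λψ on Ω, where Δ = Σᵢ ∂²/∂xᵢ². Then ψ ≡ 0 on Ω. -/

import Mathlib

open MeasureTheory

/-- Euclidean Laplacian of a complex-valued function on `ℝⁿ`. -/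
noncomputable def lap {n : ℕ} (f : EuclideanSpace ℝ (Fin n) → ℂ)
    (x : EuclideanSpace ℝ (Fin n)) : ℂ :=
  ∑ i : Fin n, fderiv ℝ (fun y => fderiv ℝ f y (EuclideanSpace.single i 1)) x
    (EuclideanSpace.single i 1)

/-!
Write `n = 2m + 1` with `m` real and conjugate a real solution `u` to `v = e^φ r^m u`, where `φ` is
an increasing radial weight. The Pohozaev field `r^(-2m) (2 ⟪x, ∇v⟫ ∇v - (|∇v|² - q v²) x)`, with
`q = φ'² + lam - V`, has divergence at least `(lam / 2) e^(2φ) u²` as soon as `r φ''` is small,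
because the virial `V + ⟪x, ∇V⟫` tends to `0` at infinity and is dominated by `φ'²` elsewhere.
Since `∇u` is square integrable by the Caccioppoli inequality, the identity can be integrated
against radial cutoffs for bounded `φ`, and bounds `e^(2φ(c)) ∫_{|x| ≥ c} u²` by
`K e^(2φ(b)) ∫_{|x| ≥ a} (|∇u|² + u²)` for `R < a < b < c`. Take `φ = τ r` up to a large radius,
levelled off on a logarithmic scale to a bounded weight, so that `K` is of order `τ²`. Letting
`τ → ∞` forces `u = 0` beyond `c`. As `c` may be any radius above `R`, the solution vanishes in the
whole exterior region at once, without a separate unique continuation step.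
-/

open Set Filter Topology Bornology Module InnerProductSpace
open scoped Gradient Laplacian RealInnerProductSpace

section VectorCalculus

variable {E : Type*} [NormedAddCommGroup E] [InnerProductSpace ℝ E]

section Gradient

variable [CompleteSpace E]

lemma gradient_mul {f g : E → ℝ} {x : E} (hf : DifferentiableAt ℝ f x)
    (hg : DifferentiableAt ℝ g x) :
    ∇ (fun y => f y * g y) x = f x • ∇ g x + g x • ∇ f x := by
  simp [gradient, fderiv_fun_mul hf hg]

lemma hasGradientAt_comp_norm {f : ℝ → ℝ} {f' : ℝ} {x : E} (hx : x ≠ 0)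
    (hf : HasDerivAt f f' ‖x‖) :
    HasGradientAt (fun y => f ‖y‖) ((f' / ‖x‖) • x) x := by
  have hsq : HasFDerivAt (fun y : E => ‖y‖ ^ 2) (2 • innerSL ℝ x) x :=
    (hasStrictFDerivAt_norm_sq x).hasFDerivAt
  have hnorm := hsq.sqrt (by positivity)
  simp only [Real.sqrt_sq (norm_nonneg _)] at hnorm
  refine (hf.comp_hasFDerivAt x hnorm).congr_fderiv ?_
  ext y
  simp only [one_div, mul_inv_rev, smul_apply, coe_innerSL_apply, nsmul_eq_mul, Nat.cast_ofNat,
    smul_eq_mul, map_smul, toDual_apply_apply]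
  field_simp

lemma gradient_comp_norm {f : ℝ → ℝ} {x : E} (hx : x ≠ 0) (hf : DifferentiableAt ℝ f ‖x‖) :
    ∇ (fun y => f ‖y‖) x = (deriv f ‖x‖ / ‖x‖) • x :=
  (hasGradientAt_comp_norm hx hf.hasDerivAt).gradient

lemma contDiffAt_gradient {n : WithTop ℕ∞} {u : E → ℝ} {x : E} (hu : ContDiffAt ℝ (n + 1) u x) :
    ContDiffAt ℝ n (∇ u) x :=
  (toDual ℝ E).symm.contDiff.contDiffAt.comp x (hu.fderiv_right le_rfl)

lemma inner_fderiv_gradient {u : E → ℝ} {x : E} (hu : ContDiffAt ℝ 2 u x) (y z : E) :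
    ⟪fderiv ℝ (∇ u) x y, z⟫ = fderiv ℝ (fderiv ℝ u) x y z := by
  have hgrad : DifferentiableAt ℝ (∇ u) x := (contDiffAt_gradient hu).differentiableAt one_ne_zero
  have hfderiv : DifferentiableAt ℝ (fderiv ℝ u) x :=
    (hu.fderiv_right (m := 1) le_rfl).differentiableAt one_ne_zero
  have hinner := fderiv_inner_apply ℝ hgrad (differentiableAt_const z) y
  have happly := fderiv_clm_apply hfderiv (differentiableAt_const z)
  simp only [inner_gradient_left] at hinner
  simpa [happly] using hinner.symm

lemma inner_fderiv_gradient_comm {u : E → ℝ} {x : E} (hu : ContDiffAt ℝ 2 u x) (y z : E) :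
    ⟪fderiv ℝ (∇ u) x y, z⟫ = ⟪y, fderiv ℝ (∇ u) x z⟫ := by
  rw [real_inner_comm _ y, inner_fderiv_gradient hu, inner_fderiv_gradient hu]
  exact hu.isSymmSndFDerivAt (by simp) y z

end Gradient

/-- The divergence of a vector field, as the trace of its derivative; it is `0` at points where the
field is not differentiable. -/
noncomputable def divergence (G : E → E) (x : E) : ℝ := LinearMap.trace ℝ E (fderiv ℝ G x)

lemma divergence_sub {G H : E → E} {x : E} (hG : DifferentiableAt ℝ G x)
    (hH : DifferentiableAt ℝ H x) :
    divergence (fun y => G y - H y) x = divergence G x - divergence H x := by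
  simp [divergence, fderiv_fun_sub hG hH]

lemma divergence_add {G H : E → E} {x : E} (hG : DifferentiableAt ℝ G x)
    (hH : DifferentiableAt ℝ H x) :
    divergence (fun y => G y + H y) x = divergence G x + divergence H x := by
  simp [divergence, fderiv_fun_add hG hH]

variable [FiniteDimensional ℝ E]

lemma divergence_id (x : E) : divergence (fun y => y) x = finrank ℝ E := by
  simp [divergence]

lemma divergence_smul {f : E → ℝ} {G : E → E} {x : E} (hf : DifferentiableAt ℝ f x)
    (hG : DifferentiableAt ℝ G x) :
    divergence (fun y => f y • G y) x = f x * divergence G x + ⟪∇ f x, G x⟫ := by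
  simp [divergence, fderiv_fun_smul hf hG, LinearMap.trace_smulRight]

lemma divergence_gradient {u : E → ℝ} {x : E} (hu : ContDiffAt ℝ 2 u x) :
    divergence (∇ u) x = Δ u x := by
  rw [laplacian_eq_iteratedFDeriv_stdOrthonormalBasis,
    divergence, LinearMap.trace_eq_sum_inner _ (stdOrthonormalBasis ℝ E)]
  simp [iteratedFDeriv_two_apply, ← inner_fderiv_gradient hu, real_inner_comm]

lemma laplacian_mul {f g : E → ℝ} {x : E} (hf : ContDiffAt ℝ 2 f x) (hg : ContDiffAt ℝ 2 g x) :
    Δ (fun y => f y * g y) x = f x * Δ g x + 2 * ⟪∇ f x, ∇ g x⟫ + g x * Δ f x := by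
  have hdf : ∀ᶠ y in 𝓝 x, DifferentiableAt ℝ f y :=
    (hf.eventually (by simp)).mono fun y hy => hy.differentiableAt two_ne_zero
  have hdg : ∀ᶠ y in 𝓝 x, DifferentiableAt ℝ g y :=
    (hg.eventually (by simp)).mono fun y hy => hy.differentiableAt two_ne_zero
  have hgf : DifferentiableAt ℝ (∇ f) x := (contDiffAt_gradient hf).differentiableAt one_ne_zero
  have hgg : DifferentiableAt ℝ (∇ g) x := (contDiffAt_gradient hg).differentiableAt one_ne_zero
  have hgrad : ∇ (fun y => f y * g y) =ᶠ[𝓝 x] fun y => f y • ∇ g y + g y • ∇ f y := by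
    filter_upwards [hdf, hdg] with y using gradient_mul
  rw [← divergence_gradient (hf.mul hg), divergence, hgrad.fderiv_eq, ← divergence,
    divergence_add (hdf.self_of_nhds.fun_smul hgg) (hdg.self_of_nhds.fun_smul hgf),
    divergence_smul hdf.self_of_nhds hgg, divergence_smul hdg.self_of_nhds hgf,
    divergence_gradient hf, divergence_gradient hg, real_inner_comm (∇ f x)]
  ring

lemma laplacian_comp_norm {f : ℝ → ℝ} {x : E} (hx : x ≠ 0) (hf : ContDiffAt ℝ 2 f ‖x‖) :
    Δ (fun y : E => f ‖y‖) x =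
      deriv (deriv f) ‖x‖ + (finrank ℝ E - 1) / ‖x‖ * deriv f ‖x‖ := by
  have hdiff : ∀ᶠ r in 𝓝 ‖x‖, DifferentiableAt ℝ f r :=
    (hf.eventually (by simp)).mono fun r hr => hr.differentiableAt two_ne_zero
  have hgrad : ∇ (fun y => f ‖y‖) =ᶠ[𝓝 x] fun y => (deriv f ‖y‖ / ‖y‖) • y := by
    filter_upwards [continuous_norm.continuousAt.eventually hdiff, isOpen_ne.mem_nhds hx]
      with y hy hy0 using gradient_comp_norm hy0 hy
  have hr : ‖x‖ ≠ 0 := norm_ne_zero_iff.2 hx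
  have hderiv : DifferentiableAt ℝ (deriv f) ‖x‖ :=
    (hf.derivWithin (m := 1) le_rfl).differentiableAt one_ne_zero
  have hcoeff := hasGradientAt_comp_norm hx (hderiv.hasDerivAt.fun_div (hasDerivAt_id' _) hr)
  rw [← divergence_gradient (hf.fun_comp x (contDiffAt_norm ℝ hx)), divergence, hgrad.fderiv_eq,
    ← divergence, divergence_smul hcoeff.differentiableAt differentiableAt_fun_id,
    divergence_id, hcoeff.gradient, real_inner_smul_left, real_inner_self_eq_norm_sq]
  field_simp
  ring

end VectorCalculus

section Pohozaev

variable {E : Type*} [NormedAddCommGroup E] [InnerProductSpace ℝ E] [FiniteDimensional ℝ E]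

/-- The vector field whose divergence gives the Pohozaev (virial) identity for solutions of
`Δ v + q v = 0`: it comes from multiplying the equation by the dilation derivative `⟪x, ∇ v⟫`. -/
noncomputable def pohozaevField (v q : E → ℝ) (x : E) : E :=
  (2 * ⟪x, ∇ v x⟫) • ∇ v x - (‖∇ v x‖ ^ 2 - q x * v x ^ 2) • x

variable {v q : E → ℝ} {x : E}

lemma inner_gradient_inner_self_gradient (hv : ContDiffAt ℝ 2 v x) (y : E) :
    ⟪∇ (fun z => ⟪z, ∇ v z⟫) x, y⟫ = ⟪y, ∇ v x⟫ + ⟪x, fderiv ℝ (∇ v) x y⟫ := by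
  have hgrad : DifferentiableAt ℝ (∇ v) x := (contDiffAt_gradient hv).differentiableAt one_ne_zero
  rw [inner_gradient_left, fderiv_inner_apply ℝ differentiableAt_fun_id hgrad]
  simp [add_comm]

lemma inner_gradient_norm_gradient_sq (hv : ContDiffAt ℝ 2 v x) (y : E) :
    ⟪∇ (fun z => ‖∇ v z‖ ^ 2) x, y⟫ = 2 * ⟪fderiv ℝ (∇ v) x y, ∇ v x⟫ := by
  have hgrad : DifferentiableAt ℝ (∇ v) x := (contDiffAt_gradient hv).differentiableAt one_ne_zero
  rw [inner_gradient_left, hgrad.hasFDerivAt.norm_sq.fderiv]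
  simp

lemma contDiffAt_pohozaevField (hv : ContDiffAt ℝ 2 v x) (hq : ContDiffAt ℝ 1 q x) :
    ContDiffAt ℝ 1 (pohozaevField v q) x := by
  have hv₁ : ContDiffAt ℝ 1 v x := hv.of_le one_le_two
  have hgrad : ContDiffAt ℝ 1 (∇ v) x := contDiffAt_gradient hv
  exact ((contDiffAt_const.mul (contDiffAt_id.inner ℝ hgrad)).smul hgrad).sub
    (((hgrad.norm_sq ℝ).sub (hq.mul (hv₁.pow 2))).smul contDiffAt_id)

lemma divergence_pohozaevField (hv : ContDiffAt ℝ 2 v x) (hq : DifferentiableAt ℝ q x) :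
    divergence (pohozaevField v q) x =
      (2 - finrank ℝ E) * ‖∇ v x‖ ^ 2 + (finrank ℝ E * q x + ⟪∇ q x, x⟫) * v x ^ 2
        + 2 * ⟪x, ∇ v x⟫ * (Δ v x + q x * v x) := by
  have hdv : DifferentiableAt ℝ v x := hv.differentiableAt two_ne_zero
  have hgrad : DifferentiableAt ℝ (∇ v) x := (contDiffAt_gradient hv).differentiableAt one_ne_zero
  have hdil : DifferentiableAt ℝ (fun y => ⟪y, ∇ v y⟫) x := differentiableAt_fun_id.inner ℝ hgrad
  have hsq : DifferentiableAt ℝ (fun y => ‖∇ v y‖ ^ 2) x := hgrad.norm_sq ℝ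
  have hqv : DifferentiableAt ℝ (fun y => q y * v y ^ 2) x := hq.fun_mul (hdv.fun_pow 2)
  have hgrad_dil : ⟪∇ (fun y => 2 * ⟪y, ∇ v y⟫) x, ∇ v x⟫ =
      2 * (‖∇ v x‖ ^ 2 + ⟪x, fderiv ℝ (∇ v) x (∇ v x)⟫) := by
    rw [← real_inner_self_eq_norm_sq, ← inner_gradient_inner_self_gradient hv,
      inner_gradient_left, inner_gradient_left, fderiv_const_mul hdil]
    simp
  have hgrad_energy : ⟪∇ (fun y => ‖∇ v y‖ ^ 2 - q y * v y ^ 2) x, x⟫ =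
      2 * ⟪fderiv ℝ (∇ v) x x, ∇ v x⟫ - (⟪∇ q x, x⟫ * v x ^ 2 + 2 * q x * v x * ⟪x, ∇ v x⟫) := by
    rw [← inner_gradient_norm_gradient_sq hv, inner_gradient_left, inner_gradient_left,
      fderiv_fun_sub hsq hqv, fderiv_fun_mul hq (hdv.fun_pow 2), fderiv_fun_pow 2 hdv]
    simp only [Nat.add_one_sub_one, pow_one, nsmul_eq_mul, Nat.cast_ofNat, sub_apply, add_apply,
      smul_apply, smul_eq_mul, inner_gradient_left, inner_gradient_right, Real.ringHom_apply,
      sub_right_inj]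
    ring
  unfold pohozaevField
  rw [divergence_sub ((hdil.const_mul 2).fun_smul hgrad)
      ((hsq.fun_sub hqv).fun_smul differentiableAt_fun_id),
    divergence_smul (hdil.const_mul 2) hgrad,
    divergence_smul (hsq.fun_sub hqv) differentiableAt_fun_id,
    divergence_gradient hv, divergence_id, hgrad_dil, hgrad_energy,
    inner_fderiv_gradient_comm hv x]
  ring

lemma inner_self_pohozaevField (v q : E → ℝ) (x : E) :
    ⟪x, pohozaevField v q x⟫ =
      2 * ⟪x, ∇ v x⟫ ^ 2 - ‖x‖ ^ 2 * (‖∇ v x‖ ^ 2 - q x * v x ^ 2) := by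
  simp only [pohozaevField, inner_sub_right, real_inner_smul_right, real_inner_self_eq_norm_sq]
  ring

lemma abs_inner_self_pohozaevField_le (v q : E → ℝ) (x : E) :
    |⟪x, pohozaevField v q x⟫| ≤ ‖x‖ ^ 2 * (‖∇ v x‖ ^ 2 + |q x| * v x ^ 2) := by
  have hCS : ⟪x, ∇ v x⟫ ^ 2 ≤ ‖x‖ ^ 2 * ‖∇ v x‖ ^ 2 := by
    rw [← mul_pow, ← sq_abs]
    gcongr
    exact abs_real_inner_le_norm x _
  have hq : |‖x‖ ^ 2 * (q x * v x ^ 2)| = ‖x‖ ^ 2 * (|q x| * v x ^ 2) := by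
    simp [abs_mul]
  obtain ⟨hq₁, hq₂⟩ := abs_le.1 hq.le
  rw [inner_self_pohozaevField, abs_le]
  constructor <;> nlinarith [sq_nonneg ⟪x, ∇ v x⟫]

lemma divergence_exp_smul_pohozaevField {m : ℝ} (hm : (finrank ℝ E : ℝ) = 2 * m + 1) (hx : x ≠ 0)
    (hv : ContDiffAt ℝ 2 v x) (hq : ContDiffAt ℝ 1 q x) :
    divergence (fun y => Real.exp (-2 * m * Real.log ‖y‖) • pohozaevField v q y) x =
      Real.exp (-2 * m * Real.log ‖x‖) * (‖∇ v x‖ ^ 2 + (q x + ⟪∇ q x, x⟫) * v x ^ 2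
        + 2 * ⟪x, ∇ v x⟫ * (Δ v x + q x * v x - 2 * m / ‖x‖ ^ 2 * ⟪x, ∇ v x⟫)) := by
  have hr : ‖x‖ ≠ 0 := norm_ne_zero_iff.2 hx
  have hweight := hasGradientAt_comp_norm hx (((Real.hasDerivAt_log hr).const_mul (-2 * m)).exp)
  rw [divergence_smul hweight.differentiableAt
      ((contDiffAt_pohozaevField hv hq).differentiableAt one_ne_zero), hweight.gradient,
    real_inner_smul_left, inner_self_pohozaevField,
    divergence_pohozaevField hv (hq.differentiableAt one_ne_zero), hm]
  field_simp
  ring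

end Pohozaev

section Conjugation

variable {E : Type*} [NormedAddCommGroup E] [InnerProductSpace ℝ E] [FiniteDimensional ℝ E]
  {g : ℝ → ℝ} {u : E → ℝ} {x : E}

lemma gradient_exp_comp_norm_mul (hx : x ≠ 0) (hg : DifferentiableAt ℝ g ‖x‖)
    (hu : DifferentiableAt ℝ u x) :
    ∇ (fun y => Real.exp (g ‖y‖) * u y) x =
      Real.exp (g ‖x‖) • (∇ u x + (deriv g ‖x‖ * u x / ‖x‖) • x) := by
  have hweight := hasGradientAt_comp_norm hx hg.hasDerivAt.exp
  rw [gradient_mul hweight.differentiableAt hu, hweight.gradient]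
  module

lemma laplacian_exp_comp_norm (hx : x ≠ 0) (hg : ContDiffAt ℝ 2 g ‖x‖) :
    Δ (fun y : E => Real.exp (g ‖y‖)) x = Real.exp (g ‖x‖) *
      (deriv (deriv g) ‖x‖ + deriv g ‖x‖ ^ 2 + (finrank ℝ E - 1) / ‖x‖ * deriv g ‖x‖) := by
  have hderiv_exp :
      deriv (fun r => Real.exp (g r)) =ᶠ[𝓝 ‖x‖] fun r => Real.exp (g r) * deriv g r := by
    filter_upwards [hg.eventually (by simp)] with r hr
    exact (hr.differentiableAt two_ne_zero).hasDerivAt.exp.deriv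
  have hg' : DifferentiableAt ℝ (deriv g) ‖x‖ :=
    (hg.derivWithin (m := 1) le_rfl).differentiableAt one_ne_zero
  rw [laplacian_comp_norm hx hg.exp, hderiv_exp.deriv_eq, hderiv_exp.self_of_nhds,
    ((hg.differentiableAt two_ne_zero).hasDerivAt.exp.fun_mul hg'.hasDerivAt).deriv]
  ring

lemma laplacian_exp_comp_norm_mul (hx : x ≠ 0) (hg : ContDiffAt ℝ 2 g ‖x‖)
    (hu : ContDiffAt ℝ 2 u x) :
    Δ (fun y => Real.exp (g ‖y‖) * u y) x = Real.exp (g ‖x‖) * Δ u x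
      + 2 * deriv g ‖x‖ / ‖x‖ * ⟪x, ∇ (fun y => Real.exp (g ‖y‖) * u y) x⟫
      + (deriv (deriv g) ‖x‖ - deriv g ‖x‖ ^ 2 + (finrank ℝ E - 1) / ‖x‖ * deriv g ‖x‖)
        * (Real.exp (g ‖x‖) * u x) := by
  have hr : ‖x‖ ≠ 0 := norm_ne_zero_iff.2 hx
  have hdg : DifferentiableAt ℝ g ‖x‖ := hg.differentiableAt two_ne_zero
  have hweight := hasGradientAt_comp_norm hx hdg.hasDerivAt.exp
  rw [laplacian_mul (hg.exp.fun_comp x (contDiffAt_norm ℝ hx)) hu, laplacian_exp_comp_norm hx hg,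
    hweight.gradient, gradient_exp_comp_norm_mul hx hdg (hu.differentiableAt two_ne_zero)]
  simp only [inner_add_right, real_inner_smul_right, real_inner_smul_left,
    real_inner_self_eq_norm_sq]
  field_simp
  ring

end Conjugation

section Carleman

variable {E : Type*} [NormedAddCommGroup E] [InnerProductSpace ℝ E]

/-- The exponent `φ(r) + m log r`. For `2m + 1` the dimension, the factor `rᵐ` removes the
first-order term of the radial Laplacian, and `φ` is the Carleman weight. -/
noncomputable def weightExponent (φ : ℝ → ℝ) (m r : ℝ) : ℝ := φ r + m * Real.log r

/-- The conjugated function `exp (φ(r)) rᵐ u`. -/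
noncomputable def conjugate (φ : ℝ → ℝ) (m : ℝ) (u : E → ℝ) (x : E) : ℝ :=
  Real.exp (weightExponent φ m ‖x‖) * u x

/-- The effective potential `φ'² + λ - V` in the equation of the conjugated function. -/
noncomputable def carlemanPotential (φ : ℝ → ℝ) (lam : ℝ) (V : E → ℝ) (x : E) : ℝ :=
  deriv φ ‖x‖ ^ 2 + lam - V x

variable {φ : ℝ → ℝ} {m r lam : ℝ} {V u : E → ℝ} {x : E}

lemma contDiffAt_weightExponent (hr : r ≠ 0) (hφ : ContDiffAt ℝ 2 φ r) :
    ContDiffAt ℝ 2 (weightExponent φ m) r :=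
  hφ.add (contDiffAt_const.mul (Real.contDiffAt_log.2 hr))

lemma deriv_weightExponent (hr : r ≠ 0) (hφ : DifferentiableAt ℝ φ r) :
    deriv (weightExponent φ m) r = deriv φ r + m / r :=
  (hφ.hasDerivAt.add ((Real.hasDerivAt_log hr).const_mul m)).deriv

lemma deriv_deriv_weightExponent (hr : r ≠ 0) (hφ : ContDiffAt ℝ 2 φ r) :
    deriv (deriv (weightExponent φ m)) r = deriv (deriv φ) r - m / r ^ 2 := by
  have hderiv : deriv (weightExponent φ m) =ᶠ[𝓝 r] fun s => deriv φ s + m * s⁻¹ := by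
    filter_upwards [hφ.eventually (by simp), isOpen_ne.mem_nhds hr] with s hs hs0
    exact deriv_weightExponent hs0 (hs.differentiableAt two_ne_zero)
  have hφ' : DifferentiableAt ℝ (deriv φ) r :=
    (hφ.derivWithin (m := 1) le_rfl).differentiableAt one_ne_zero
  rw [hderiv.deriv_eq, (hφ'.hasDerivAt.fun_add ((hasDerivAt_inv hr).const_mul m)).deriv]
  ring

lemma exp_log_mul_exp_weightExponent_sq (φ : ℝ → ℝ) (m r : ℝ) :
    Real.exp (-2 * m * Real.log r) * Real.exp (weightExponent φ m r) ^ 2 =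
      Real.exp (2 * φ r) := by
  rw [← Real.exp_nat_mul, ← Real.exp_add, weightExponent]
  congr 1
  push_cast
  ring

lemma contDiffAt_conjugate (hx : x ≠ 0) (hφ : ContDiffAt ℝ 2 φ ‖x‖)
    (hu : ContDiffAt ℝ 2 u x) :
    ContDiffAt ℝ 2 (conjugate φ m u) x :=
  ((contDiffAt_weightExponent (norm_ne_zero_iff.2 hx) hφ).exp.fun_comp x
    (contDiffAt_norm ℝ hx)).mul hu

lemma contDiffAt_carlemanPotential (hx : x ≠ 0) (hφ : ContDiffAt ℝ 2 φ ‖x‖)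
    (hV : ContDiffAt ℝ 1 V x) : ContDiffAt ℝ 1 (carlemanPotential φ lam V) x :=
  ((((hφ.derivWithin (m := 1) le_rfl).fun_comp x (contDiffAt_norm ℝ hx)).pow 2).add
    contDiffAt_const).sub hV

variable [FiniteDimensional ℝ E]

/-- The Pohozaev field of the conjugated function, scaled by `r⁻²ᵐ` so that its
divergence is of the size of `exp (2φ) u²`. -/
noncomputable def carlemanField (φ : ℝ → ℝ) (m lam : ℝ) (V u : E → ℝ) (x : E) : E :=
  Real.exp (-2 * m * Real.log ‖x‖) •
    pohozaevField (conjugate φ m u) (carlemanPotential φ lam V) x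

lemma contDiffAt_carlemanField (hx : x ≠ 0) (hφ : ContDiffAt ℝ 2 φ ‖x‖)
    (hV : ContDiffAt ℝ 1 V x) (hu : ContDiffAt ℝ 2 u x) :
    ContDiffAt ℝ 1 (carlemanField φ m lam V u) x :=
  ((contDiffAt_const.mul ((contDiffAt_norm ℝ hx).log (norm_ne_zero_iff.2 hx))).exp).smul
    (contDiffAt_pohozaevField (contDiffAt_conjugate hx hφ hu)
      (contDiffAt_carlemanPotential hx hφ hV))

lemma inner_gradient_carlemanPotential_self (hx : x ≠ 0) (hφ : ContDiffAt ℝ 2 φ ‖x‖)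
    (hV : DifferentiableAt ℝ V x) :
    ⟪∇ (carlemanPotential φ lam V) x, x⟫ =
      2 * deriv φ ‖x‖ * (‖x‖ * deriv (deriv φ) ‖x‖) - ⟪∇ V x, x⟫ := by
  have hr : ‖x‖ ≠ 0 := norm_ne_zero_iff.2 hx
  have hφ' : DifferentiableAt ℝ (deriv φ) ‖x‖ :=
    (hφ.derivWithin (m := 1) le_rfl).differentiableAt one_ne_zero
  have hradial :=
    (hasGradientAt_comp_norm hx ((hφ'.hasDerivAt.fun_pow 2).add_const lam)).hasFDerivAt
  rw [inner_gradient_left, inner_gradient_left]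
  unfold carlemanPotential
  rw [(hradial.fun_sub hV.hasFDerivAt).fderiv]
  simp only [Nat.cast_ofNat, Nat.add_one_sub_one, pow_one, map_smul, sub_apply, smul_apply,
    toDual_apply_apply, inner_self_eq_norm_sq_to_K, Real.ringHom_apply, smul_eq_mul, sub_left_inj]
  field_simp

lemma laplacian_conjugate_add (hm : (finrank ℝ E : ℝ) = 2 * m + 1) (hx : x ≠ 0)
    (hφ : ContDiffAt ℝ 2 φ ‖x‖) (hu : ContDiffAt ℝ 2 u x) (heq : Δ u x = (V x - lam) * u x) :
    Δ (conjugate φ m u) x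
        + carlemanPotential φ lam V x * conjugate φ m u x =
      2 * (deriv φ ‖x‖ + m / ‖x‖) / ‖x‖ * ⟪x, ∇ (conjugate φ m u) x⟫
        + (deriv (deriv φ) ‖x‖ + m * (m - 1) / ‖x‖ ^ 2) * conjugate φ m u x := by
  have hr : ‖x‖ ≠ 0 := norm_ne_zero_iff.2 hx
  unfold conjugate
  rw [laplacian_exp_comp_norm_mul hx (contDiffAt_weightExponent hr hφ) hu, heq,
    deriv_weightExponent hr (hφ.differentiableAt two_ne_zero),
    deriv_deriv_weightExponent hr hφ, hm, carlemanPotential]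
  field_simp
  ring

lemma divergence_carlemanField (hm : (finrank ℝ E : ℝ) = 2 * m + 1) (hx : x ≠ 0)
    (hφ : ContDiffAt ℝ 2 φ ‖x‖) (hV : ContDiffAt ℝ 1 V x)
    (hu : ContDiffAt ℝ 2 u x) (heq : Δ u x = (V x - lam) * u x) :
    divergence (carlemanField φ m lam V u) x = Real.exp (-2 * m * Real.log ‖x‖) *
      (‖∇ (conjugate φ m u) x‖ ^ 2
        + (lam - (V x + ⟪∇ V x, x⟫) + deriv φ ‖x‖ ^ 2
          + 2 * deriv φ ‖x‖ * (‖x‖ * deriv (deriv φ) ‖x‖)) * conjugate φ m u x ^ 2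
        + 4 * ‖x‖ * deriv φ ‖x‖ * (⟪x, ∇ (conjugate φ m u) x⟫ / ‖x‖) ^ 2
        + 2 * (‖x‖ * deriv (deriv φ) ‖x‖ + m * (m - 1) / ‖x‖)
          * conjugate φ m u x * (⟪x, ∇ (conjugate φ m u) x⟫ / ‖x‖)) := by
  have hr : ‖x‖ ≠ 0 := norm_ne_zero_iff.2 hx
  unfold carlemanField
  rw [divergence_exp_smul_pohozaevField hm hx (contDiffAt_conjugate hx hφ hu)
      (contDiffAt_carlemanPotential hx hφ hV), laplacian_conjugate_add hm hx hφ hu heq,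
    inner_gradient_carlemanPotential_self hx hφ (hV.differentiableAt one_ne_zero),
    carlemanPotential]
  field_simp
  ring

/-- The coefficient of `(exp (φ(r)) u)²` in the lower bound for the divergence of the Carleman
field; the estimate needs it to be bounded below by a positive constant. -/
noncomputable def carlemanCoefficient (φ : ℝ → ℝ) (m lam : ℝ) (V : E → ℝ) (x : E) : ℝ :=
  lam - (V x + ⟪∇ V x, x⟫) + deriv φ ‖x‖ ^ 2 + 2 * deriv φ ‖x‖ * (‖x‖ * deriv (deriv φ) ‖x‖)
    - (‖x‖ * deriv (deriv φ) ‖x‖ + m * (m - 1) / ‖x‖) ^ 2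

/- Discarding `4 r φ' v_r²`, the quadratic form in `(v, v_r)` is bounded below by completing the
square, as `v_r² ≤ ‖∇ v‖²`. -/
lemma mul_sq_le_divergence_carlemanField (hm : (finrank ℝ E : ℝ) = 2 * m + 1) (hx : x ≠ 0)
    (hφ : ContDiffAt ℝ 2 φ ‖x‖) (hφ' : 0 ≤ deriv φ ‖x‖) (hV : ContDiffAt ℝ 1 V x)
    (hu : ContDiffAt ℝ 2 u x) (heq : Δ u x = (V x - lam) * u x) :
    carlemanCoefficient φ m lam V x * (Real.exp (2 * φ ‖x‖) * u x ^ 2) ≤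
      divergence (carlemanField φ m lam V u) x := by
  have hr : 0 < ‖x‖ := norm_pos_iff.2 hx
  have hsq : Real.exp (2 * φ ‖x‖) * u x ^ 2 =
      Real.exp (-2 * m * Real.log ‖x‖) * conjugate φ m u x ^ 2 := by
    rw [← exp_log_mul_exp_weightExponent_sq φ m, conjugate]
    ring
  rw [divergence_carlemanField hm hx hφ hV hu heq, carlemanCoefficient, hsq, mul_left_comm]
  gcongr
  set v := conjugate φ m u
  set radial := ⟪x, ∇ v x⟫ / ‖x‖ with hradial
  have hCS : radial ^ 2 ≤ ‖∇ v x‖ ^ 2 := by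
    rw [hradial, sq_le_sq, abs_div, abs_norm, abs_norm, div_le_iff₀ hr, mul_comm]
    exact abs_real_inner_le_norm x _
  have hdrop : 0 ≤ 4 * ‖x‖ * deriv φ ‖x‖ * radial ^ 2 := by positivity
  nlinarith [sq_nonneg (radial + (‖x‖ * deriv (deriv φ) ‖x‖ + m * (m - 1) / ‖x‖) * v x)]

lemma norm_gradient_conjugate_sq_le (hx : x ≠ 0) (hφ : DifferentiableAt ℝ φ ‖x‖)
    (hu : DifferentiableAt ℝ u x) :
    ‖∇ (conjugate φ m u) x‖ ^ 2 ≤ Real.exp (weightExponent φ m ‖x‖) ^ 2 *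
      (2 * ‖∇ u x‖ ^ 2 + 2 * (deriv φ ‖x‖ + m / ‖x‖) ^ 2 * u x ^ 2) := by
  have hr : ‖x‖ ≠ 0 := norm_ne_zero_iff.2 hx
  have hexp : DifferentiableAt ℝ (weightExponent φ m) ‖x‖ :=
    hφ.add ((Real.differentiableAt_log hr).const_mul m)
  set radial := ((deriv φ ‖x‖ + m / ‖x‖) * u x / ‖x‖) • x with hradial
  have hnorm : ‖radial‖ ^ 2 = (deriv φ ‖x‖ + m / ‖x‖) ^ 2 * u x ^ 2 := by
    rw [hradial, norm_smul, Real.norm_eq_abs, mul_pow, sq_abs]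
    field_simp
  unfold conjugate
  rw [gradient_exp_comp_norm_mul hx hexp hu, deriv_weightExponent hr hφ, norm_smul, mul_pow,
    Real.norm_eq_abs, sq_abs]
  gcongr
  nlinarith [parallelogram_law_with_norm ℝ (∇ u x) radial, sq_nonneg ‖∇ u x - radial‖]

lemma abs_inner_self_carlemanField_le (hx : x ≠ 0) (hφ : DifferentiableAt ℝ φ ‖x‖)
    (hu : DifferentiableAt ℝ u x) :
    |⟪x, carlemanField φ m lam V u x⟫| ≤ ‖x‖ ^ 2 * (Real.exp (2 * φ ‖x‖) *
      (2 * ‖∇ u x‖ ^ 2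
        + (2 * (deriv φ ‖x‖ + m / ‖x‖) ^ 2 + |carlemanPotential φ lam V x|) * u x ^ 2)) := by
  have hv := norm_gradient_conjugate_sq_le (m := m) hx hφ hu
  calc |⟪x, carlemanField φ m lam V u x⟫|
      = Real.exp (-2 * m * Real.log ‖x‖) *
          |⟪x, pohozaevField (conjugate φ m u) (carlemanPotential φ lam V) x⟫| := by
        rw [carlemanField, real_inner_smul_right, abs_mul, Real.abs_exp]
    _ ≤ Real.exp (-2 * m * Real.log ‖x‖) * (‖x‖ ^ 2 * (‖∇ (conjugate φ m u) x‖ ^ 2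
          + |carlemanPotential φ lam V x| * conjugate φ m u x ^ 2)) := by
        gcongr
        exact abs_inner_self_pohozaevField_le _ _ _
    _ ≤ Real.exp (-2 * m * Real.log ‖x‖) * (‖x‖ ^ 2 *
          (Real.exp (weightExponent φ m ‖x‖) ^ 2 *
            (2 * ‖∇ u x‖ ^ 2 + 2 * (deriv φ ‖x‖ + m / ‖x‖) ^ 2 * u x ^ 2)
          + |carlemanPotential φ lam V x| * conjugate φ m u x ^ 2)) := by
        gcongr
    _ = _ := by
        rw [← exp_log_mul_exp_weightExponent_sq φ m, conjugate]
        ring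

end Carleman

section DivergenceTheorem

variable {E : Type*} [NormedAddCommGroup E]

lemma support_deriv_subset_Icc {χ : ℝ → ℝ} {a b : ℝ} (hχ : Function.support χ ⊆ Icc a b) :
    Function.support (deriv χ) ⊆ Icc a b :=
  support_deriv_subset.trans (closure_minimal hχ isClosed_Icc)

lemma tsupport_comp_norm_smul_subset {F : Type*} [NormedAddCommGroup F] [NormedSpace ℝ F]
    {χ : ℝ → ℝ} {a b : ℝ} (hχ : Function.support χ ⊆ Icc a b) (G : E → F) :
    tsupport (fun x => χ ‖x‖ • G x) ⊆ {x | ‖x‖ ∈ Icc a b} := by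
  refine closure_minimal (fun x hx => hχ ?_) (isClosed_Icc.preimage continuous_norm)
  exact (smul_ne_zero_iff.1 (Function.mem_support.1 hx)).1

variable [InnerProductSpace ℝ E]

lemma contDiff_comp_norm_smul {χ : ℝ → ℝ} {R a b : ℝ} (hR : 0 ≤ R) (hRa : R < a)
    (hχ : ContDiff ℝ 1 χ) (hsupp : Function.support χ ⊆ Icc a b) {G : E → E}
    (hG : ∀ x, R < ‖x‖ → ContDiffAt ℝ 1 G x) : ContDiff ℝ 1 (fun x => χ ‖x‖ • G x) := by
  refine contMDiff_iff_contDiff.1 (contMDiff_of_tsupport fun x hx => ContDiffAt.contMDiffAt ?_)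
  have hx : R < ‖x‖ := hRa.trans_le (tsupport_comp_norm_smul_subset hsupp G hx).1
  exact (hχ.contDiffAt.comp x (contDiffAt_norm ℝ (norm_pos_iff.1 (hR.trans_lt hx)))).smul
    (hG x hx)

variable [FiniteDimensional ℝ E]

lemma isCompact_shell (a b : ℝ) : IsCompact {x : E | ‖x‖ ∈ Icc a b} :=
  (isCompact_closedBall (0 : E) b).of_isClosed_subset (isClosed_Icc.preimage continuous_norm)
    fun _ hx => mem_closedBall_zero_iff.2 hx.2

lemma hasCompactSupport_comp_norm_smul {F : Type*} [NormedAddCommGroup F] [NormedSpace ℝ F]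
    {χ : ℝ → ℝ} {a b : ℝ} (hχ : Function.support χ ⊆ Icc a b) (G : E → F) :
    HasCompactSupport (fun x => χ ‖x‖ • G x) :=
  (isCompact_shell a b).of_isClosed_subset (isClosed_tsupport _)
    (tsupport_comp_norm_smul_subset hχ G)

variable [MeasurableSpace E] [BorelSpace E]

lemma integral_fderiv_apply_eq_zero {f : E → ℝ} (hf : ContDiff ℝ 1 f) (hc : HasCompactSupport f)
    (y : E) : ∫ x, fderiv ℝ f x y = 0 := by
  have hint : Integrable (fun x => fderiv ℝ f x y) :=
    ((hf.continuous_fderiv one_ne_zero).clm_apply continuous_const).integrable_of_hasCompactSupport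
      (hc.fderiv_apply ℝ y)
  simpa using integral_mul_fderiv_eq_neg_fderiv_mul_of_integrable (𝕜 := ℝ) (μ := volume)
    (f := fun _ : E => (1 : ℝ)) (g := f) (v := y) (by simp) (by simpa using hint)
    (by simpa using hf.continuous.integrable_of_hasCompactSupport hc)
    (fun _ _ => differentiableAt_const 1) (fun x _ => hf.differentiable one_ne_zero x)

theorem integral_divergence_eq_zero {G : E → E} (hG : ContDiff ℝ 1 G) (hc : HasCompactSupport G) :
    ∫ x, divergence G x = 0 := by
  let e := stdOrthonormalBasis ℝ E
  have hcoord : ∀ i, ContDiff ℝ 1 (fun x => ⟪e i, G x⟫) := fun i => contDiff_const.inner ℝ hG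
  have hcompact : ∀ i, HasCompactSupport (fun x => ⟪e i, G x⟫) := fun i =>
    hc.comp_left (g := fun y => ⟪e i, y⟫) (inner_zero_right _)
  have hsum : divergence G = fun x => ∑ i, fderiv ℝ (fun y => ⟪e i, G y⟫) x (e i) := by
    ext x
    simp [divergence, LinearMap.trace_eq_sum_inner _ e,
      fderiv_inner_apply ℝ (differentiableAt_const _) (hG.differentiable one_ne_zero x)]
  rw [hsum, integral_finsetSum _ fun i _ => ?_]
  · exact Finset.sum_eq_zero fun i _ => integral_fderiv_apply_eq_zero (hcoord i) (hcompact i) _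
  · exact (((hcoord i).continuous_fderiv one_ne_zero).clm_apply
      continuous_const).integrable_of_hasCompactSupport ((hcompact i).fderiv_apply ℝ _)

variable {R a b : ℝ} {χ : ℝ → ℝ}

lemma integrable_comp_norm_mul (hRa : R < a) (hχ : Continuous χ)
    (hsupp : Function.support χ ⊆ Icc a b) {f : E → ℝ} (hf : ContinuousOn f {x | R < ‖x‖}) :
    Integrable (fun x => χ ‖x‖ * f x) := by
  refine Continuous.integrable_of_hasCompactSupport ?_ (hasCompactSupport_comp_norm_smul hsupp f)
  refine continuous_of_tsupport fun x hx => ?_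
  have hx : R < ‖x‖ := hRa.trans_le (tsupport_comp_norm_smul_subset hsupp f hx).1
  exact (hχ.comp continuous_norm).continuousAt.mul
    (hf.continuousAt ((isOpen_lt continuous_const continuous_norm).mem_nhds hx))

theorem integral_comp_norm_mul_divergence_add (hR : 0 ≤ R) (hRa : R < a) (hχ : ContDiff ℝ 1 χ)
    (hsupp : Function.support χ ⊆ Icc a b) {G : E → E}
    (hG : ∀ x, R < ‖x‖ → ContDiffAt ℝ 1 G x) :
    ∫ x, (χ ‖x‖ * divergence G x + deriv χ ‖x‖ * (⟪x, G x⟫ / ‖x‖)) = 0 := by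
  rw [← integral_divergence_eq_zero (contDiff_comp_norm_smul hR hRa hχ hsupp hG)
    (hasCompactSupport_comp_norm_smul hsupp G)]
  congr 1 with x
  rcases lt_or_ge R ‖x‖ with hx | hx
  · have hgrad := hasGradientAt_comp_norm (norm_pos_iff.1 (hR.trans_lt hx))
      (hχ.differentiable one_ne_zero ‖x‖).hasDerivAt
    rw [divergence_smul hgrad.differentiableAt ((hG x hx).differentiableAt one_ne_zero),
      hgrad.gradient, real_inner_smul_left]
    ring
  · have hxa : ‖x‖ ∉ Icc a b := fun h => (hx.trans_lt hRa).not_ge h.1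
    have hfderiv : fderiv ℝ (fun x => χ ‖x‖ • G x) x = 0 := fderiv_of_notMem_tsupport ℝ
      fun h => hxa (tsupport_comp_norm_smul_subset hsupp G h)
    rw [divergence.eq_def (fun x => χ ‖x‖ • G x), hfderiv,
      Function.notMem_support.1 (notMem_subset hsupp hxa),
      Function.notMem_support.1 (notMem_subset (support_deriv_subset_Icc hsupp) hxa)]
    simp

lemma integrable_comp_norm_mul_divergence_add (hR : 0 ≤ R) (hRa : R < a) (hχ : ContDiff ℝ 1 χ)
    (hsupp : Function.support χ ⊆ Icc a b) {G : E → E}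
    (hG : ∀ x, R < ‖x‖ → ContDiffAt ℝ 1 G x) :
    Integrable (fun x => χ ‖x‖ * divergence G x + deriv χ ‖x‖ * (⟪x, G x⟫ / ‖x‖)) := by
  have hdiv : ContinuousOn (divergence G) {x | R < ‖x‖} := fun x hx =>
    ((LinearMap.toContinuousLinearMap (LinearMap.trace ℝ E ∘ₗ
      ContinuousLinearMap.coeLM ℝ)).continuous.continuousAt.comp
        ((hG x hx).continuousAt_fderiv one_ne_zero)).continuousWithinAt
  have hrad : ContinuousOn (fun x => ⟪x, G x⟫ / ‖x‖) {x | R < ‖x‖} := fun x hx =>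
    ((continuousAt_id.inner (hG x hx).continuousAt).div continuous_norm.continuousAt
      (hR.trans_lt hx).ne').continuousWithinAt
  exact (integrable_comp_norm_mul hRa hχ.continuous hsupp hdiv).add
    (integrable_comp_norm_mul hRa (hχ.continuous_deriv le_rfl) (support_deriv_subset_Icc hsupp)
      hrad)

theorem integral_le_integral_of_le_divergence_add (hR : 0 ≤ R) (hRa : R < a) (hχ : ContDiff ℝ 1 χ)
    (hsupp : Function.support χ ⊆ Icc a b) {G : E → E}
    (hG : ∀ x, R < ‖x‖ → ContDiffAt ℝ 1 G x) {f g : E → ℝ} (hf : Integrable f) (hg : Integrable g)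
    (hle : ∀ x, f x ≤ χ ‖x‖ * divergence G x + deriv χ ‖x‖ * (⟪x, G x⟫ / ‖x‖) + g x) :
    ∫ x, f x ≤ ∫ x, g x := by
  have hint := integrable_comp_norm_mul_divergence_add hR hRa hχ hsupp hG
  refine (integral_mono hf (hint.add hg) hle).trans_eq ?_
  rw [integral_add' hint hg, integral_comp_norm_mul_divergence_add hR hRa hχ hsupp hG, zero_add]

end DivergenceTheorem

section Exterior

variable {E : Type*} [NormedAddCommGroup E] [MeasurableSpace E] [OpensMeasurableSpace E]
  {μ : Measure E} {f : E → ℝ} {b : ℝ}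

lemma measurableSet_exterior (b : ℝ) : MeasurableSet {x : E | b ≤ ‖x‖} :=
  (isClosed_le continuous_const continuous_norm).measurableSet

lemma restrict_exterior_restrict_closedBall (b N : ℝ) :
    (μ.restrict {x | b ≤ ‖x‖}).restrict (Metric.closedBall 0 N) =
      μ.restrict {x | ‖x‖ ∈ Icc b N} := by
  rw [Measure.restrict_restrict Metric.isClosed_closedBall.measurableSet]
  congr 1 with x
  simp [and_comm]

lemma integrableOn_exterior_of_setIntegral_shell_le {I : ℝ} (hf : ∀ x, 0 ≤ f x)
    (hint : ∀ N, IntegrableOn f {x | ‖x‖ ∈ Icc b N} μ)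
    (hle : ∀ᶠ N in atTop, ∫ x in {x | ‖x‖ ∈ Icc b N}, f x ∂μ ≤ I) :
    IntegrableOn f {x | b ≤ ‖x‖} μ := by
  refine (aecover_closedBall (x := 0) tendsto_id).integrable_of_integral_norm_bounded I
    (fun N => ?_) ?_
  · rw [IntegrableOn, restrict_exterior_restrict_closedBall]
    exact hint N
  · simpa only [id, restrict_exterior_restrict_closedBall, Real.norm_of_nonneg (hf _)] using hle

lemma tendsto_setIntegral_shell (hint : IntegrableOn f {x | b ≤ ‖x‖} μ) :
    Tendsto (fun N => ∫ x in {x | ‖x‖ ∈ Icc b N}, f x ∂μ) atTop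
      (𝓝 (∫ x in {x | b ≤ ‖x‖}, f x ∂μ)) := by
  simpa only [id, restrict_exterior_restrict_closedBall] using
    (aecover_closedBall (x := 0) tendsto_id).integral_tendsto_of_countably_generated hint

lemma tendsto_setIntegral_exterior (hint : IntegrableOn f {x | b ≤ ‖x‖} μ) :
    Tendsto (fun N : ℝ => ∫ x in {x | N ≤ ‖x‖}, f x ∂μ) atTop (𝓝 0) := by
  have hempty : ⋂ N : ℝ, {x : E | N ≤ ‖x‖} = ∅ :=
    eq_empty_of_forall_notMem fun x hx => (lt_add_one ‖x‖).not_ge (mem_iInter.1 hx (‖x‖ + 1))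
  simpa [hempty] using tendsto_setIntegral_of_antitone measurableSet_exterior
    (fun _ _ h _ hx => h.trans hx) ⟨b, hint⟩

end Exterior

section Cutoff

open Real (smoothTransition)

lemma deriv_smoothTransition_eq_zero {t : ℝ} (ht : t ∉ Icc 0 1) : deriv smoothTransition t = 0 := by
  rw [mem_Icc, not_and_or, not_le, not_le] at ht
  rcases ht with ht | ht
  · refine IsLocalMin.deriv_eq_zero (Eventually.of_forall fun s => ?_)
    rw [smoothTransition.zero_of_nonpos ht.le]
    exact smoothTransition.nonneg s
  · refine IsLocalMax.deriv_eq_zero (Eventually.of_forall fun s => ?_)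
    rw [smoothTransition.one_of_one_le ht.le]
    exact smoothTransition.le_one s

lemma exists_one_add_abs_mul_abs_deriv_smoothTransition_le :
    ∃ M, ∀ t, (1 + |t|) * |deriv smoothTransition t| ≤ M := by
  have hderiv : Continuous (deriv smoothTransition) :=
    (smoothTransition.contDiff (n := 1)).continuous_deriv le_rfl
  have hsupp : HasCompactSupport (deriv smoothTransition) :=
    HasCompactSupport.intro isCompact_Icc fun _ => deriv_smoothTransition_eq_zero
  obtain ⟨M, hM⟩ := (hsupp.mul_left (f := fun t => 1 + |t|)).exists_bound_of_continuous
    ((continuous_const.add continuous_abs).mul hderiv)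
  refine ⟨M, fun t => ?_⟩
  simpa [abs_mul, abs_of_nonneg (show 0 ≤ 1 + |t| by positivity)] using hM t

lemma abs_mul_deriv_smoothTransition_comp_le {M B r : ℝ}
    (hM : ∀ t, (1 + |t|) * |deriv smoothTransition t| ≤ M) {g : ℝ → ℝ} {g' : ℝ}
    (hg : HasDerivAt g g' r) (hle : |r * g'| ≤ B * (1 + |g r|)) :
    |r * deriv (fun s => smoothTransition (g s)) r| ≤ B * M := by
  have hB : 0 ≤ B := nonneg_of_mul_nonneg_left ((abs_nonneg _).trans hle) (by positivity)
  have hdiff : Differentiable ℝ smoothTransition :=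
    (smoothTransition.contDiff (n := 1)).differentiable one_ne_zero
  have hcomp : HasDerivAt (fun s => smoothTransition (g s)) (deriv smoothTransition (g r) * g') r :=
    (hdiff _).hasDerivAt.comp r hg
  rw [hcomp.deriv, mul_left_comm, abs_mul, mul_comm]
  calc |r * g'| * |deriv smoothTransition (g r)|
      ≤ B * (1 + |g r|) * |deriv smoothTransition (g r)| := by gcongr
    _ = B * ((1 + |g r|) * |deriv smoothTransition (g r)|) := by ring
    _ ≤ B * M := by gcongr; exact hM _

/-- `χ` is a cutoff function of the radius, rising from `0` to `1` on `[a, b]` and falling back to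
`0` on `[N, 2N]`, with logarithmic slope at most `A`. -/
structure IsRadialCutoff (a b N A : ℝ) (χ : ℝ → ℝ) : Prop where
  contDiff : ContDiff ℝ 1 χ
  support_subset : Function.support χ ⊆ Icc a (2 * N)
  nonneg : ∀ r, 0 ≤ χ r
  le_one : ∀ r, χ r ≤ 1
  eq_one : ∀ r ∈ Icc b N, χ r = 1
  abs_mul_deriv_le : ∀ r, |r * deriv χ r| ≤ A

namespace IsRadialCutoff

variable {a b N A : ℝ} {χ : ℝ → ℝ}

lemma bound_nonneg (hχ : IsRadialCutoff a b N A χ) : 0 ≤ A :=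
  (abs_nonneg _).trans (hχ.abs_mul_deriv_le 0)

lemma deriv_eq_zero (hχ : IsRadialCutoff a b N A χ) {r : ℝ} (hr : r ∈ Icc b N) :
    deriv χ r = 0 :=
  IsLocalMax.deriv_eq_zero (Eventually.of_forall fun s => (hχ.le_one s).trans (hχ.eq_one r hr).ge)

lemma eq_zero_of_lt (hχ : IsRadialCutoff a b N A χ) {r : ℝ} (hr : r < a) : χ r = 0 :=
  Function.notMem_support.1 fun h => hr.not_ge (hχ.support_subset h).1

lemma deriv_eq_zero_of_lt (hχ : IsRadialCutoff a b N A χ) {r : ℝ} (hr : r < a) :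
    deriv χ r = 0 :=
  Function.notMem_support.1 fun h => hr.not_ge (support_deriv_subset_Icc hχ.support_subset h).1

lemma abs_deriv_le (hχ : IsRadialCutoff a b N A χ) (ha : 0 < a) (r : ℝ) :
    |deriv χ r| ≤ A / a := by
  have hA := hχ.bound_nonneg
  rcases lt_or_ge r a with hr | hr
  · rw [hχ.deriv_eq_zero_of_lt hr, abs_zero]
    positivity
  · rw [le_div_iff₀' ha]
    calc a * |deriv χ r| ≤ |r| * |deriv χ r| := by gcongr; exact hr.trans (le_abs_self r)
      _ ≤ A := abs_mul r _ ▸ hχ.abs_mul_deriv_le r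

end IsRadialCutoff

lemma exists_isRadialCutoff {a b : ℝ} (ha : 0 ≤ a) (hab : a < b) :
    ∃ A, ∀ N, 0 < N → ∃ χ, IsRadialCutoff a b N A χ := by
  obtain ⟨M, hM⟩ := exists_one_add_abs_mul_abs_deriv_smoothTransition_le
  have hba : 0 < b - a := sub_pos.2 hab
  refine ⟨b / (b - a) * M + 2 * M, fun N hN => ?_⟩
  have hsmooth : ContDiff ℝ 1 smoothTransition := smoothTransition.contDiff
  have hdiff : Differentiable ℝ smoothTransition := hsmooth.differentiable one_ne_zero
  refine ⟨fun r => smoothTransition ((r - a) / (b - a)) * smoothTransition (2 - r / N),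
    ?_, fun r hr => ?_, fun r => ?_, fun r => ?_, fun r hr => ?_, fun r => ?_⟩
  · fun_prop
  · obtain ⟨hrise, hfall⟩ := mul_ne_zero_iff.1 (Function.mem_support.1 hr)
    rw [Ne, smoothTransition.zero_iff_nonpos, not_le] at hrise hfall
    rw [div_pos_iff_of_pos_right hba] at hrise
    rw [sub_pos, div_lt_iff₀ hN] at hfall
    exact ⟨by linarith, hfall.le⟩
  · exact mul_nonneg (smoothTransition.nonneg _) (smoothTransition.nonneg _)
  · exact mul_le_one₀ (smoothTransition.le_one _) (smoothTransition.nonneg _)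
      (smoothTransition.le_one _)
  · have hrise : 1 ≤ (r - a) / (b - a) := (one_le_div hba).2 (by linarith [hr.1])
    have hfall : 1 ≤ 2 - r / N := by linarith [(div_le_one hN).2 hr.2]
    simp [smoothTransition.one_of_one_le hrise, smoothTransition.one_of_one_le hfall]
  · have hrise :
        |r * deriv (fun s => smoothTransition ((s - a) / (b - a))) r| ≤ b / (b - a) * M := by
      refine abs_mul_deriv_smoothTransition_comp_le hM
        (((hasDerivAt_id r).sub_const a).div_const (b - a)) ?_
      rw [abs_div, abs_of_pos hba, abs_mul, abs_of_pos (one_div_pos.2 hba)]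
      have hr : |r| ≤ |r - a| + a := by simpa [abs_of_nonneg ha] using abs_add_le (r - a) a
      field_simp
      nlinarith [mul_nonneg ha (abs_nonneg (r - a)), abs_nonneg (r - a)]
    have hfall : |r * deriv (fun s => smoothTransition (2 - s / N)) r| ≤ 2 * M := by
      refine abs_mul_deriv_smoothTransition_comp_le hM
        (((hasDerivAt_id r).div_const N).const_sub 2) ?_
      rw [show r * -(1 / N) = (2 - r / N) - 2 by ring]
      linarith [abs_sub (2 - r / N) 2, abs_nonneg (2 - r / N), abs_two (α := ℝ)]
    rw [deriv_fun_mul (by fun_prop) (by fun_prop), mul_add, ← mul_assoc, mul_left_comm]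
    refine (abs_add_le _ _).trans (add_le_add ?_ ?_) <;> rw [abs_mul]
    · rw [abs_of_nonneg (smoothTransition.nonneg _)]
      exact (mul_le_of_le_one_right (abs_nonneg _) (smoothTransition.le_one _)).trans hrise
    · rw [abs_of_nonneg (smoothTransition.nonneg _)]
      exact (mul_le_of_le_one_left (abs_nonneg _) (smoothTransition.le_one _)).trans hfall

end Cutoff

section Caccioppoli

variable {E : Type*} [NormedAddCommGroup E] [InnerProductSpace ℝ E] [FiniteDimensional ℝ E]

lemma divergence_smul_gradient {u : E → ℝ} {x : E} (hu : ContDiffAt ℝ 2 u x) :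
    divergence (fun y => u y • ∇ u y) x = u x * Δ u x + ‖∇ u x‖ ^ 2 := by
  rw [divergence_smul (hu.differentiableAt two_ne_zero)
    ((contDiffAt_gradient hu).differentiableAt one_ne_zero), divergence_gradient hu,
    real_inner_self_eq_norm_sq]

lemma sq_mul_half_le_add_mul {c d u s g l B C : ℝ} (hc : 0 ≤ c) (hc' : c ≤ 1) (hd : |d| ≤ B)
    (hs : |s| ≤ g) (hl : -(u * l) ≤ C * u ^ 2) (hC : 0 ≤ C) :
    c ^ 2 * (g ^ 2 / 2) ≤
      c ^ 2 * (u * l + g ^ 2) + 2 * c * d * (u * s) + (2 * B ^ 2 + C) * u ^ 2 := by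
  have hsq : c ^ 2 * s ^ 2 ≤ c ^ 2 * g ^ 2 :=
    mul_le_mul_of_nonneg_left (sq_le_sq.2 (hs.trans (le_abs_self g))) (sq_nonneg c)
  have hdu : d ^ 2 * u ^ 2 ≤ B ^ 2 * u ^ 2 :=
    mul_le_mul_of_nonneg_right (sq_le_sq.2 (hd.trans (le_abs_self B))) (sq_nonneg u)
  have hlow : -(C * u ^ 2) ≤ c ^ 2 * (u * l) := by
    nlinarith [mul_le_mul_of_nonneg_left hl (sq_nonneg c), mul_nonneg hC (sq_nonneg u),
      mul_le_mul_of_nonneg_right (pow_le_one₀ hc hc' : c ^ 2 ≤ 1) (mul_nonneg hC (sq_nonneg u))]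
  nlinarith [sq_nonneg (c * s + 2 * d * u)]

variable [MeasurableSpace E] [BorelSpace E] {R a b N A C : ℝ} {χ : ℝ → ℝ} {u : E → ℝ}

lemma integral_cutoff_sq_mul_norm_gradient_sq_le (hR : 0 ≤ R) (hRa : R < a)
    (hχ : IsRadialCutoff a b N A χ) (hu : ∀ x, R < ‖x‖ → ContDiffAt ℝ 2 u x)
    (hint : IntegrableOn (fun x => u x ^ 2) {x | R < ‖x‖}) (hC : 0 ≤ C)
    (hlap : ∀ x, R < ‖x‖ → -(u x * Δ u x) ≤ C * u x ^ 2) :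
    ∫ x, χ ‖x‖ ^ 2 * (‖∇ u x‖ ^ 2 / 2) ≤
      (2 * (A / a) ^ 2 + C) * ∫ x in {x | R < ‖x‖}, u x ^ 2 := by
  have hΩ : MeasurableSet {x : E | R < ‖x‖} :=
    (isOpen_lt continuous_const continuous_norm).measurableSet
  have hsupp : Function.support (χ ^ 2) ⊆ Icc a (2 * N) :=
    (Function.support_pow' χ two_ne_zero).trans_subset hχ.support_subset
  have hgrad : ∀ x, R < ‖x‖ → ContDiffAt ℝ 1 (∇ u) x := fun x hx => contDiffAt_gradient (hu x hx)
  rw [← integral_const_mul, ← integral_indicator hΩ]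
  refine integral_le_integral_of_le_divergence_add (G := fun x => u x • ∇ u x) hR hRa
    (hχ.contDiff.pow 2) hsupp (fun x hx => ?_) ?_ ?_ fun x => ?_
  · exact ((hu x hx).of_le one_le_two).smul (hgrad x hx)
  · exact integrable_comp_norm_mul hRa (hχ.contDiff.pow 2).continuous hsupp fun x hx =>
      (((hgrad x hx).continuousAt.norm.pow 2).div_const 2).continuousWithinAt
  · exact (integrable_indicator_iff hΩ).2 (hint.const_mul _)
  · rw [deriv_fun_pow (hχ.contDiff.differentiable one_ne_zero _)]
    rcases lt_or_ge R ‖x‖ with hx | hx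
    · rw [indicator_of_mem (show x ∈ {x | R < ‖x‖} from hx), divergence_smul_gradient (hu x hx),
        real_inner_smul_right, mul_div_assoc]
      have hrad : |⟪x, ∇ u x⟫ / ‖x‖| ≤ ‖∇ u x‖ := by
        rw [abs_div, abs_norm, div_le_iff₀' (hR.trans_lt hx)]
        exact abs_real_inner_le_norm _ _
      have h := sq_mul_half_le_add_mul (hχ.nonneg ‖x‖) (hχ.le_one ‖x‖)
        (hχ.abs_deriv_le (hR.trans_lt hRa) ‖x‖) hrad (hlap x hx) hC
      simpa [mul_assoc] using h
    · rw [indicator_of_notMem (show x ∉ {x | R < ‖x‖} from hx.not_gt),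
        hχ.eq_zero_of_lt (hx.trans_lt hRa)]
      simp

theorem integrableOn_norm_gradient_sq (hR : 0 ≤ R) (hRb : R < b)
    (hu : ∀ x, R < ‖x‖ → ContDiffAt ℝ 2 u x)
    (hint : IntegrableOn (fun x => u x ^ 2) {x | R < ‖x‖}) (hC : 0 ≤ C)
    (hlap : ∀ x, R < ‖x‖ → -(u x * Δ u x) ≤ C * u x ^ 2) :
    IntegrableOn (fun x => ‖∇ u x‖ ^ 2) {x | b ≤ ‖x‖} := by
  have hgrad : ContinuousOn (fun x => ‖∇ u x‖ ^ 2) {x | R < ‖x‖} := fun x hx =>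
    ((contDiffAt_gradient (n := 1) (hu x hx)).continuousAt.norm.pow 2).continuousWithinAt
  obtain ⟨a, hRa, hab⟩ := exists_between hRb
  obtain ⟨A, hA⟩ := exists_isRadialCutoff (hR.trans hRa.le) hab
  refine integrableOn_exterior_of_setIntegral_shell_le
    (I := 2 * ((2 * (A / a) ^ 2 + C) * ∫ x in {x | R < ‖x‖}, u x ^ 2))
    (fun x => sq_nonneg _) (fun N => ?_) ?_
  · exact (hgrad.mono fun x hx => hRb.trans_le hx.1).integrableOn_compact (isCompact_shell b N)
  · filter_upwards [eventually_gt_atTop 0] with N hN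
    obtain ⟨χ, hχ⟩ := hA N hN
    have hintχ : Integrable fun x : E => χ ‖x‖ ^ 2 * ‖∇ u x‖ ^ 2 :=
      integrable_comp_norm_mul hRa (hχ.contDiff.pow 2).continuous
        ((Function.support_pow' χ two_ne_zero).trans_subset hχ.support_subset) hgrad
    calc ∫ x in {x | ‖x‖ ∈ Icc b N}, ‖∇ u x‖ ^ 2
        = ∫ x in {x | ‖x‖ ∈ Icc b N}, χ ‖x‖ ^ 2 * ‖∇ u x‖ ^ 2 :=
          setIntegral_congr_fun (isCompact_shell b N).measurableSet fun x hx => by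
            simp [hχ.eq_one _ hx]
      _ ≤ ∫ x, χ ‖x‖ ^ 2 * ‖∇ u x‖ ^ 2 :=
          setIntegral_le_integral hintχ (Eventually.of_forall fun x => by positivity)
      _ = 2 * ∫ x, χ ‖x‖ ^ 2 * (‖∇ u x‖ ^ 2 / 2) := by
          rw [← integral_const_mul]
          congr 1 with x
          ring
      _ ≤ _ := by
          gcongr
          exact integral_cutoff_sq_mul_norm_gradient_sq_le hR hRa hχ hu hint hC hlap

end Caccioppoli

section CarlemanEstimate

variable {E : Type*} [NormedAddCommGroup E] [InnerProductSpace ℝ E] [FiniteDimensional ℝ E]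

/-- `u` is a classical solution of `-Δu + Vu = lam u` on `{x | R < ‖x‖}`, with a `C¹` potential. -/
structure IsExteriorSolution (R lam : ℝ) (V u : E → ℝ) : Prop where
  contDiffAt_potential : ∀ x, R < ‖x‖ → ContDiffAt ℝ 1 V x
  contDiffAt : ∀ x, R < ‖x‖ → ContDiffAt ℝ 2 u x
  laplacian_eq : ∀ x, R < ‖x‖ → Δ u x = (V x - lam) * u x

namespace IsExteriorSolution

variable {R lam : ℝ} {V u : E → ℝ}

lemma continuousOn_sq (hu : IsExteriorSolution R lam V u) :
    ContinuousOn (fun x => u x ^ 2) {x | R < ‖x‖} :=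
  fun x hx => ((hu.contDiffAt x hx).continuousAt.pow 2).continuousWithinAt

lemma continuousOn_norm_gradient_sq (hu : IsExteriorSolution R lam V u) :
    ContinuousOn (fun x => ‖∇ u x‖ ^ 2) {x | R < ‖x‖} := fun x hx =>
  ((contDiffAt_gradient (n := 1) (hu.contDiffAt x hx)).continuousAt.norm.pow 2).continuousWithinAt

end IsExteriorSolution

/-- `φ` is a weight, bounded above by `Φ`, for which the Carleman estimate holds on `{x | a ≤ ‖x‖}`
with constants `κ` (positivity in the interior) and `K` (boundary terms). -/
structure IsCarlemanWeight (V : E → ℝ) (m lam a κ K Φ : ℝ) (φ : ℝ → ℝ) : Prop where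
  contDiff : ContDiff ℝ 2 φ
  deriv_nonneg : ∀ r, 0 ≤ deriv φ r
  le : ∀ r, φ r ≤ Φ
  le_carlemanCoefficient : ∀ x, a ≤ ‖x‖ → κ ≤ carlemanCoefficient φ m lam V x
  two_le : 2 ≤ K
  boundary_le : ∀ x, a ≤ ‖x‖ →
    2 * (deriv φ ‖x‖ + m / ‖x‖) ^ 2 + |carlemanPotential φ lam V x| ≤ K

namespace IsCarlemanWeight

variable {V u : E → ℝ} {m lam a κ K Φ : ℝ} {φ : ℝ → ℝ} {x : E}

lemma monotone (hφ : IsCarlemanWeight V m lam a κ K Φ φ) : Monotone φ :=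
  monotone_of_deriv_nonneg (hφ.contDiff.differentiable two_ne_zero) hφ.deriv_nonneg

lemma abs_inner_self_carlemanField_le (hφ : IsCarlemanWeight V m lam a κ K Φ φ) (ha : 0 < a)
    (hx : a ≤ ‖x‖) (hu : DifferentiableAt ℝ u x) :
    |⟪x, carlemanField φ m lam V u x⟫| ≤
      ‖x‖ ^ 2 * (Real.exp (2 * φ ‖x‖) * (K * (‖∇ u x‖ ^ 2 + u x ^ 2))) := by
  refine (_root_.abs_inner_self_carlemanField_le (norm_pos_iff.1 (ha.trans_le hx))
    (hφ.contDiff.differentiable two_ne_zero _) hu).trans ?_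
  rw [mul_add K]
  gcongr
  exacts [hφ.two_le, hφ.boundary_le x hx]

end IsCarlemanWeight

variable {R m lam a b c N A κ K Φ : ℝ} {φ χ : ℝ → ℝ} {V u : E → ℝ}

lemma cutoff_mul_exp_mul_sq_le_divergence_add {x : E} (hm : (finrank ℝ E : ℝ) = 2 * m + 1)
    (hR : 0 ≤ R) (hRa : R < a) (hu : IsExteriorSolution R lam V u)
    (hφ : IsCarlemanWeight V m lam a κ K Φ φ) (hχ : IsRadialCutoff a b N A χ) :
    χ ‖x‖ * (κ * (Real.exp (2 * φ ‖x‖) * u x ^ 2)) ≤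
      χ ‖x‖ * divergence (carlemanField φ m lam V u) x
        + deriv χ ‖x‖ * (⟪x, carlemanField φ m lam V u x⟫ / ‖x‖)
        + |‖x‖ * deriv χ ‖x‖| *
          (Real.exp (2 * φ ‖x‖) * (K * (‖∇ u x‖ ^ 2 + u x ^ 2))) := by
  rcases lt_or_ge ‖x‖ a with hxa | hxa
  · simp [hχ.eq_zero_of_lt hxa, hχ.deriv_eq_zero_of_lt hxa]
  have hxR : R < ‖x‖ := hRa.trans_le hxa
  have hinterior : κ * (Real.exp (2 * φ ‖x‖) * u x ^ 2) ≤
      divergence (carlemanField φ m lam V u) x :=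
    (mul_le_mul_of_nonneg_right (hφ.le_carlemanCoefficient x hxa) (by positivity)).trans
      (mul_sq_le_divergence_carlemanField hm (norm_pos_iff.1 (hR.trans_lt hxR))
        hφ.contDiff.contDiffAt (hφ.deriv_nonneg _) (hu.contDiffAt_potential x hxR)
        (hu.contDiffAt x hxR) (hu.laplacian_eq x hxR))
  have hboundary : |deriv χ ‖x‖ * (⟪x, carlemanField φ m lam V u x⟫ / ‖x‖)| ≤
      |‖x‖ * deriv χ ‖x‖| * (Real.exp (2 * φ ‖x‖) * (K * (‖∇ u x‖ ^ 2 + u x ^ 2))) := by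
    rw [abs_mul, abs_div, abs_norm, abs_mul, abs_norm, mul_comm ‖x‖, mul_assoc]
    gcongr
    rw [div_le_iff₀ (hR.trans_lt hxR), mul_right_comm, ← sq]
    exact hφ.abs_inner_self_carlemanField_le (hR.trans_lt hRa) hxa
      ((hu.contDiffAt x hxR).differentiableAt two_ne_zero)
  linarith [mul_le_mul_of_nonneg_left hinterior (hχ.nonneg ‖x‖), (abs_le.1 hboundary).1]

/- The derivative of the cutoff lives in radii at most `b`, where the weight is small, and beyond
`N`, where only its boundedness is used. -/
lemma abs_mul_deriv_cutoff_mul_exp_mul_le (hφ : IsCarlemanWeight V m lam a κ K Φ φ)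
    (hχ : IsRadialCutoff a b N A χ) {w : E → ℝ} (hw : ∀ x, 0 ≤ w x) (x : E) :
    |‖x‖ * deriv χ ‖x‖| * (Real.exp (2 * φ ‖x‖) * (K * w x)) ≤
      A * K * (Real.exp (2 * φ b) * indicator {x | a ≤ ‖x‖} w x
        + Real.exp (2 * Φ) * indicator {x | N ≤ ‖x‖} w x) := by
  have hA := hχ.bound_nonneg
  have hK : 0 ≤ K := zero_le_two.trans hφ.two_le
  have hnonneg : ∀ s : Set E, 0 ≤ indicator s w x := fun s => indicator_nonneg (fun y _ => hw y) x
  by_cases hzero : deriv χ ‖x‖ = 0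
  · rw [hzero, mul_zero, abs_zero, zero_mul]
    have := hnonneg {x | a ≤ ‖x‖}
    have := hnonneg {x | N ≤ ‖x‖}
    positivity
  have hxa : a ≤ ‖x‖ := not_lt.1 fun h => hzero (hχ.deriv_eq_zero_of_lt h)
  have hexp : Real.exp (2 * φ ‖x‖) * w x ≤ Real.exp (2 * φ b) * indicator {x | a ≤ ‖x‖} w x
      + Real.exp (2 * Φ) * indicator {x | N ≤ ‖x‖} w x := by
    rcases le_total ‖x‖ b with hxb | hbx
    · rw [indicator_of_mem (show x ∈ {x | a ≤ ‖x‖} from hxa)]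
      refine le_add_of_le_of_nonneg ?_ (mul_nonneg (Real.exp_nonneg _) (hnonneg _))
      gcongr
      exacts [hw x, hφ.monotone hxb]
    · have hNx : N ≤ ‖x‖ := not_lt.1 fun h => hzero (hχ.deriv_eq_zero ⟨hbx, h.le⟩)
      rw [indicator_of_mem (show x ∈ {x | N ≤ ‖x‖} from hNx)]
      refine le_add_of_nonneg_of_le (mul_nonneg (Real.exp_nonneg _) (hnonneg _)) ?_
      gcongr
      exacts [hw x, hφ.le _]
  calc |‖x‖ * deriv χ ‖x‖| * (Real.exp (2 * φ ‖x‖) * (K * w x))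
      ≤ A * (Real.exp (2 * φ ‖x‖) * (K * w x)) := by
        have := hw x
        gcongr
        exact hχ.abs_mul_deriv_le _
    _ = A * K * (Real.exp (2 * φ ‖x‖) * w x) := by ring
    _ ≤ _ := by gcongr

variable [MeasurableSpace E] [BorelSpace E]

lemma IsExteriorSolution.integrable_cutoff_mul_exp_mul_sq (hu : IsExteriorSolution R lam V u)
    (hRa : R < a) (hφ : Continuous φ) (hχ : IsRadialCutoff a b N A χ) :
    Integrable (fun x => χ ‖x‖ * (κ * (Real.exp (2 * φ ‖x‖) * u x ^ 2))) := by
  refine integrable_comp_norm_mul hRa hχ.contDiff.continuous hχ.support_subset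
    ((ContinuousOn.mul ?_ hu.continuousOn_sq).const_mul κ)
  fun_prop

lemma IsExteriorSolution.integrable_abs_mul_deriv_cutoff_mul_exp_mul
    (hu : IsExteriorSolution R lam V u) (hRa : R < a) (hφ : Continuous φ)
    (hχ : IsRadialCutoff a b N A χ) :
    Integrable (fun x => |‖x‖ * deriv χ ‖x‖| *
      (Real.exp (2 * φ ‖x‖) * (K * (‖∇ u x‖ ^ 2 + u x ^ 2)))) := by
  have hsupp : Function.support (fun r => |r * deriv χ r|) ⊆ Icc a (2 * N) := fun r hr =>
    support_deriv_subset_Icc hχ.support_subset (right_ne_zero_of_mul (abs_ne_zero.1 hr))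
  refine integrable_comp_norm_mul hRa
    (continuous_id.mul (hχ.contDiff.continuous_deriv le_rfl)).abs hsupp (ContinuousOn.mul ?_
      ((hu.continuousOn_norm_gradient_sq.add hu.continuousOn_sq).const_mul K))
  fun_prop

lemma integral_cutoff_mul_exp_mul_sq_le (hm : (finrank ℝ E : ℝ) = 2 * m + 1) (hR : 0 ≤ R)
    (hRa : R < a) (hu : IsExteriorSolution R lam V u) (hφ : IsCarlemanWeight V m lam a κ K Φ φ)
    (hχ : IsRadialCutoff a b N A χ) :
    ∫ x, χ ‖x‖ * (κ * (Real.exp (2 * φ ‖x‖) * u x ^ 2)) ≤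
      ∫ x, |‖x‖ * deriv χ ‖x‖| *
        (Real.exp (2 * φ ‖x‖) * (K * (‖∇ u x‖ ^ 2 + u x ^ 2))) :=
  integral_le_integral_of_le_divergence_add hR hRa hχ.contDiff hχ.support_subset
    (fun x hx => contDiffAt_carlemanField (norm_pos_iff.1 (hR.trans_lt hx))
      hφ.contDiff.contDiffAt (hu.contDiffAt_potential x hx) (hu.contDiffAt x hx))
    (hu.integrable_cutoff_mul_exp_mul_sq hRa hφ.contDiff.continuous hχ)
    (hu.integrable_abs_mul_deriv_cutoff_mul_exp_mul hRa hφ.contDiff.continuous hχ)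
    fun _ => cutoff_mul_exp_mul_sq_le_divergence_add hm hR hRa hu hφ hχ

lemma setIntegral_shell_sq_le (hm : (finrank ℝ E : ℝ) = 2 * m + 1) (hR : 0 ≤ R) (hRa : R < a)
    (hbc : b ≤ c) (hκ : 0 ≤ κ) (hu : IsExteriorSolution R lam V u)
    (hint : IntegrableOn (fun x => ‖∇ u x‖ ^ 2 + u x ^ 2) {x | a ≤ ‖x‖})
    (hφ : IsCarlemanWeight V m lam a κ K Φ φ) (hχ : IsRadialCutoff a b N A χ) (haN : a ≤ N) :
    κ * Real.exp (2 * φ c) * ∫ x in {x | ‖x‖ ∈ Icc c N}, u x ^ 2 ≤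
      A * K * (Real.exp (2 * φ b) * (∫ x in {x | a ≤ ‖x‖}, (‖∇ u x‖ ^ 2 + u x ^ 2)) +
        Real.exp (2 * Φ) * ∫ x in {x | N ≤ ‖x‖}, (‖∇ u x‖ ^ 2 + u x ^ 2)) := by
  have hintχ := hu.integrable_cutoff_mul_exp_mul_sq (κ := κ) hRa hφ.contDiff.continuous hχ
  have hshell : MeasurableSet {x : E | ‖x‖ ∈ Icc c N} := (isCompact_shell c N).measurableSet
  have hnear := (integrable_indicator_iff (measurableSet_exterior a)).2 hint
  have hfar := (integrable_indicator_iff (measurableSet_exterior N)).2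
    (hint.mono_set fun x hx => haN.trans hx)
  calc κ * Real.exp (2 * φ c) * ∫ x in {x | ‖x‖ ∈ Icc c N}, u x ^ 2
      = ∫ x in {x | ‖x‖ ∈ Icc c N}, κ * Real.exp (2 * φ c) * u x ^ 2 :=
        (integral_const_mul _ _).symm
    _ ≤ ∫ x in {x | ‖x‖ ∈ Icc c N}, χ ‖x‖ * (κ * (Real.exp (2 * φ ‖x‖) * u x ^ 2)) := by
        refine integral_mono_of_nonneg (Eventually.of_forall fun x => by positivity)
          hintχ.integrableOn ((ae_restrict_iff' hshell).2 (Eventually.of_forall fun x hx => ?_))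
        beta_reduce
        rw [hχ.eq_one _ ⟨hbc.trans hx.1, hx.2⟩, one_mul, mul_assoc]
        gcongr
        exact hφ.monotone hx.1
    _ ≤ ∫ x, χ ‖x‖ * (κ * (Real.exp (2 * φ ‖x‖) * u x ^ 2)) :=
        setIntegral_le_integral hintχ (Eventually.of_forall fun x =>
          mul_nonneg (hχ.nonneg _) (by positivity))
    _ ≤ ∫ x, |‖x‖ * deriv χ ‖x‖| *
          (Real.exp (2 * φ ‖x‖) * (K * (‖∇ u x‖ ^ 2 + u x ^ 2))) :=
        integral_cutoff_mul_exp_mul_sq_le hm hR hRa hu hφ hχ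
    _ ≤ ∫ x, A * K * (Real.exp (2 * φ b) *
            indicator {x | a ≤ ‖x‖} (fun x => ‖∇ u x‖ ^ 2 + u x ^ 2) x
          + Real.exp (2 * Φ) * indicator {x | N ≤ ‖x‖} (fun x => ‖∇ u x‖ ^ 2 + u x ^ 2) x) :=
        integral_mono (hu.integrable_abs_mul_deriv_cutoff_mul_exp_mul hRa
          hφ.contDiff.continuous hχ) (((hnear.const_mul _).add (hfar.const_mul _)).const_mul _)
          (abs_mul_deriv_cutoff_mul_exp_mul_le hφ hχ fun x => by positivity)
    _ = _ := by
        rw [integral_const_mul, integral_add (hnear.const_mul _) (hfar.const_mul _),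
          integral_const_mul, integral_const_mul, integral_indicator (measurableSet_exterior a),
          integral_indicator (measurableSet_exterior N)]

theorem exp_mul_setIntegral_sq_le (hm : (finrank ℝ E : ℝ) = 2 * m + 1) (hR : 0 ≤ R) (hRa : R < a)
    (hab : a ≤ b) (hbc : b ≤ c) (hκ : 0 ≤ κ) (hu : IsExteriorSolution R lam V u)
    (hint : IntegrableOn (fun x => u x ^ 2) {x | a ≤ ‖x‖})
    (hgrad : IntegrableOn (fun x => ‖∇ u x‖ ^ 2) {x | a ≤ ‖x‖})
    (hφ : IsCarlemanWeight V m lam a κ K Φ φ)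
    (hA : ∀ N, 0 < N → ∃ χ, IsRadialCutoff a b N A χ) :
    κ * Real.exp (2 * φ c) * ∫ x in {x | c ≤ ‖x‖}, u x ^ 2 ≤
      A * K * (Real.exp (2 * φ b) * ∫ x in {x | a ≤ ‖x‖}, (‖∇ u x‖ ^ 2 + u x ^ 2)) := by
  have hsum : IntegrableOn (fun x => ‖∇ u x‖ ^ 2 + u x ^ 2) {x | a ≤ ‖x‖} := hgrad.add hint
  have hleft := (tendsto_setIntegral_shell (hint.mono_set fun x hx =>
    hab.trans (hbc.trans hx))).const_mul (κ * Real.exp (2 * φ c))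
  have hright := (((tendsto_setIntegral_exterior hsum).const_mul (Real.exp (2 * Φ))).const_add
    (Real.exp (2 * φ b) * ∫ x in {x | a ≤ ‖x‖}, (‖∇ u x‖ ^ 2 + u x ^ 2))).const_mul (A * K)
  rw [mul_zero, add_zero] at hright
  refine le_of_tendsto_of_tendsto hleft hright ?_
  filter_upwards [eventually_gt_atTop 0, eventually_ge_atTop a] with N hN haN
  obtain ⟨χ, hχ⟩ := hA N hN
  exact setIntegral_shell_sq_le hm hR hRa hbc hκ hu hsum hφ hχ haN

end CarlemanEstimate

section Weight

open Real (smoothTransition)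

/-- `φ` is the linear function `τ r` on `[0, ρ]`, levelling off to a bounded function so slowly that
`r φ''` never exceeds `ε`. -/
structure IsTruncatedLinear (τ ρ ε Φ : ℝ) (φ : ℝ → ℝ) : Prop where
  contDiff : ContDiff ℝ 2 φ
  deriv_nonneg : ∀ r, 0 ≤ deriv φ r
  deriv_le : ∀ r, deriv φ r ≤ τ
  deriv_eq : ∀ r ∈ Icc 0 ρ, deriv φ r = τ
  abs_mul_deriv_deriv_le : ∀ r, |r * deriv (deriv φ) r| ≤ ε
  eq_mul : ∀ r ∈ Icc 0 ρ, φ r = τ * r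
  le : ∀ r, φ r ≤ Φ

/-- A slope equal to `τ` while `log (1 + r²) ≤ 1 / σ` and to `0` once `log (1 + r²) ≥ 2 / σ`. The
logarithmic scale is what makes `r ↦ r * slope'(r)` of size `τ σ`, uniformly in `r`. -/
noncomputable def logTruncatedSlope (τ σ r : ℝ) : ℝ :=
  τ * smoothTransition (2 - σ * Real.log (1 + r ^ 2))

variable {τ σ r : ℝ}

lemma contDiff_logTruncatedSlope : ContDiff ℝ 1 (logTruncatedSlope τ σ) := by
  have hlog : ContDiff ℝ 1 fun r : ℝ => Real.log (1 + r ^ 2) :=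
    ContDiff.log (by fun_prop) fun r => by positivity
  exact contDiff_const.mul (smoothTransition.contDiff.comp
    (contDiff_const.sub (contDiff_const.mul hlog)))

lemma logTruncatedSlope_nonneg (hτ : 0 ≤ τ) : 0 ≤ logTruncatedSlope τ σ r :=
  mul_nonneg hτ (smoothTransition.nonneg _)

lemma logTruncatedSlope_le (hτ : 0 ≤ τ) : logTruncatedSlope τ σ r ≤ τ :=
  mul_le_of_le_one_right hτ (smoothTransition.le_one _)

lemma logTruncatedSlope_eq (h : σ * Real.log (1 + r ^ 2) ≤ 1) : logTruncatedSlope τ σ r = τ := by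
  rw [logTruncatedSlope, smoothTransition.one_of_one_le (by linarith), mul_one]

lemma logTruncatedSlope_eq_zero (h : 2 ≤ σ * Real.log (1 + r ^ 2)) :
    logTruncatedSlope τ σ r = 0 := by
  rw [logTruncatedSlope, smoothTransition.zero_of_nonpos (by linarith), mul_zero]

lemma exists_abs_mul_deriv_logTruncatedSlope_le :
    ∃ M, ∀ τ σ r, 0 ≤ τ → 0 ≤ σ → |r * deriv (logTruncatedSlope τ σ) r| ≤ τ * (2 * σ * M) := by
  obtain ⟨M, hM⟩ := exists_one_add_abs_mul_abs_deriv_smoothTransition_le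
  refine ⟨M, fun τ σ r hτ hσ => ?_⟩
  have hexponent : HasDerivAt (fun s : ℝ => 2 - σ * Real.log (1 + s ^ 2))
      (-(σ * (2 * r / (1 + r ^ 2)))) r := by
    simpa using ((((hasDerivAt_pow 2 r).const_add 1).log (by positivity)).const_mul σ).const_sub 2
  unfold logTruncatedSlope
  rw [deriv_const_mul_field, mul_left_comm, abs_mul, abs_of_nonneg hτ]
  gcongr
  refine abs_mul_deriv_smoothTransition_comp_le hM hexponent ?_
  rw [show r * -(σ * (2 * r / (1 + r ^ 2))) = -(2 * σ * (r ^ 2 / (1 + r ^ 2))) by ring, abs_neg,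
    abs_of_nonneg (by positivity)]
  gcongr
  exact ((div_le_one (by positivity)).2 (by linarith)).trans (le_add_of_nonneg_right (abs_nonneg _))

lemma exists_forall_intervalIntegral_logTruncatedSlope_le (hτ : 0 ≤ τ) (hσ : 0 < σ) :
    ∃ Φ, ∀ r, ∫ t in 0..r, logTruncatedSlope τ σ t ≤ Φ := by
  have hcont : Continuous (logTruncatedSlope τ σ) := contDiff_logTruncatedSlope.continuous
  have hdiff : Differentiable ℝ fun r => ∫ t in 0..r, logTruncatedSlope τ σ t := fun r =>
    (hcont.integral_hasStrictDerivAt 0 r).hasDerivAt.differentiableAt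
  have hmono : Monotone fun r => ∫ t in 0..r, logTruncatedSlope τ σ t :=
    monotone_of_deriv_nonneg hdiff fun r => by
      rw [hcont.deriv_integral]
      exact logTruncatedSlope_nonneg hτ
  have hanti : AntitoneOn (fun r => ∫ t in 0..r, logTruncatedSlope τ σ t)
      (Ici (Real.exp (1 / σ))) := by
    refine antitoneOn_of_deriv_nonpos (convex_Ici _) hdiff.continuous.continuousOn
      hdiff.differentiableOn fun r hr => ?_
    rw [interior_Ici, mem_Ioi] at hr
    rw [hcont.deriv_integral, logTruncatedSlope_eq_zero]
    rw [← div_le_iff₀' hσ, Real.le_log_iff_exp_le (by positivity)]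
    calc Real.exp (2 / σ) = Real.exp (1 / σ) ^ 2 := by rw [← Real.exp_nat_mul]; ring_nf
      _ ≤ r ^ 2 := by gcongr
      _ ≤ 1 + r ^ 2 := by linarith
  refine ⟨_, fun r => (le_total r (Real.exp (1 / σ))).elim (fun h => hmono h) fun h => ?_⟩
  exact hanti self_mem_Ici h h

theorem exists_isTruncatedLinear {ρ ε : ℝ} (hτ : 0 ≤ τ) (hε : 0 < ε) :
    ∃ φ Φ, IsTruncatedLinear τ ρ ε Φ φ := by
  obtain ⟨M, hM⟩ := exists_abs_mul_deriv_logTruncatedSlope_le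
  have hsmall : ∀ᶠ σ in 𝓝[>] (0 : ℝ),
      τ * (2 * σ * M) ≤ ε ∧ σ * Real.log (1 + ρ ^ 2) ≤ 1 := by
    refine Eventually.filter_mono nhdsWithin_le_nhds (Eventually.and ?_ ?_)
    · exact (Continuous.tendsto' (by fun_prop) 0 0 (by simp)).eventually_le_const hε
    · exact (Continuous.tendsto' (by fun_prop) 0 0 (by simp)).eventually_le_const one_pos
  obtain ⟨σ, ⟨hσε, hσρ⟩, hσ : 0 < σ⟩ := (hsmall.and self_mem_nhdsWithin).exists
  have hcont : Continuous (logTruncatedSlope τ σ) := contDiff_logTruncatedSlope.continuous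
  have hderiv : deriv (fun r => ∫ t in 0..r, logTruncatedSlope τ σ t) = logTruncatedSlope τ σ :=
    funext fun r => hcont.deriv_integral _ 0 r
  have hconst : ∀ r ∈ Icc 0 ρ, logTruncatedSlope τ σ r = τ := fun r hr => by
    refine logTruncatedSlope_eq (le_trans ?_ hσρ)
    gcongr
    exacts [hr.1, hr.2]
  obtain ⟨Φ, hΦ⟩ := exists_forall_intervalIntegral_logTruncatedSlope_le hτ hσ
  refine ⟨_, Φ, ?_, fun r => ?_, fun r => ?_, fun r hr => ?_, fun r => ?_, fun r hr => ?_, hΦ⟩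
  · rw [show (2 : WithTop ℕ∞) = 1 + 1 by norm_num, contDiff_succ_iff_deriv, hderiv]
    exact ⟨fun r => (hcont.integral_hasStrictDerivAt 0 r).hasDerivAt.differentiableAt,
      by simp, contDiff_logTruncatedSlope⟩
  · rw [hderiv]
    exact logTruncatedSlope_nonneg hτ
  · rw [hderiv]
    exact logTruncatedSlope_le hτ
  · rw [hderiv]
    exact hconst r hr
  · rw [hderiv]
    exact (hM τ σ r hτ hσ.le).trans hσε
  · rw [intervalIntegral.integral_congr (g := fun _ => τ) fun t ht => ?_]
    · simp [mul_comm]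
    · rw [uIcc_of_le hr.1] at ht
      exact hconst t ⟨ht.1, ht.2.trans hr.2⟩

end Weight

section WeightExistence

variable {E : Type*} [NormedAddCommGroup E] {m lam a B C τ ρ ε Φ : ℝ} {φ : ℝ → ℝ} {V : E → ℝ}

lemma abs_carlemanPotential_le {x : E} (hlam : 0 ≤ lam) (hφ : IsTruncatedLinear τ ρ ε Φ φ)
    (hV : |V x| ≤ C) : |carlemanPotential φ lam V x| ≤ τ ^ 2 + lam + C := by
  refine (abs_sub _ _).trans (add_le_add ?_ hV)
  rw [abs_of_nonneg (by positivity)]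
  gcongr
  exacts [hφ.deriv_nonneg _, hφ.deriv_le _]

variable [InnerProductSpace ℝ E] [FiniteDimensional ℝ E]

/-- The terms of `carlemanCoefficient` that do not involve the weight: the virial `V + x · ∇V` of
the potential and the inverse-square term produced by the dimension. -/
noncomputable def carlemanDefect (m : ℝ) (V : E → ℝ) (x : E) : ℝ :=
  V x + ⟪∇ V x, x⟫ + 2 * (m * (m - 1) / ‖x‖) ^ 2

lemma half_le_carlemanCoefficient {x : E} (hε : ε ≤ 1) (hετ : ε * (8 * (τ + 1)) ≤ lam)
    (hφ : IsTruncatedLinear τ ρ ε Φ φ)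
    (hdefect : carlemanDefect m V x ≤ lam / 4 + deriv φ ‖x‖ ^ 2) :
    lam / 2 ≤ carlemanCoefficient φ m lam V x := by
  unfold carlemanDefect at hdefect
  unfold carlemanCoefficient
  set w := ‖x‖ * deriv (deriv φ) ‖x‖
  set q := m * (m - 1) / ‖x‖
  have hw : |w| ≤ ε := hφ.abs_mul_deriv_deriv_le _
  have hcross : -(τ * ε) ≤ deriv φ ‖x‖ * w := by
    refine neg_le_of_abs_le ?_
    rw [abs_mul, abs_of_nonneg (hφ.deriv_nonneg _)]
    exact mul_le_mul (hφ.deriv_le _) hw (abs_nonneg _) ((hφ.deriv_nonneg 0).trans (hφ.deriv_le 0))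
  have hw_sq : w ^ 2 ≤ ε := calc
    w ^ 2 ≤ ε ^ 2 := sq_le_sq' (neg_le_of_abs_le hw) (le_of_abs_le hw)
    _ ≤ ε := pow_le_of_le_one ((abs_nonneg w).trans hw) hε two_ne_zero
  have hsum_sq : (w + q) ^ 2 ≤ 2 * (w ^ 2 + q ^ 2) := add_sq_le
  linarith

/- The radius `ρ` up to which the weight is linear is chosen so that the defect is at most
`lam / 4` beyond it; below `ρ` the defect is absorbed by `deriv φ ‖x‖ ^ 2 = τ ^ 2`. -/
theorem exists_isCarlemanWeight (hm : 0 ≤ m) (hlam : 0 < lam) (ha : 0 < a) (hC : 0 ≤ C)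
    (hV : ∀ x, a ≤ ‖x‖ → |V x| ≤ C) (hB : ∀ x, a ≤ ‖x‖ → carlemanDefect m V x ≤ B)
    (hdefect : Tendsto (carlemanDefect m V) (cobounded E) (𝓝 0)) (hτ : 1 ≤ τ) (hBτ : B ≤ τ ^ 2)
    (c : ℝ) :
    ∃ φ Φ, IsCarlemanWeight V m lam a (lam / 2)
      ((2 + 2 * (1 + m / a) ^ 2 + (1 + lam + C)) * τ ^ 2) Φ φ ∧ ∀ r ∈ Icc 0 c, φ r = τ * r := by
  have hτ_sq : 1 ≤ τ ^ 2 := one_le_pow₀ hτ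
  obtain ⟨ρ, -, hρ⟩ := (hasBasis_cobounded_norm (E := E)).eventually_iff.1
    (hdefect.eventually_le_const (show (0 : ℝ) < lam / 4 by positivity))
  have hε : 0 < min 1 (lam / (8 * (τ + 1))) := by positivity
  obtain ⟨φ, Φ, hφ⟩ := exists_isTruncatedLinear (ρ := max c ρ) (zero_le_one.trans hτ) hε
  refine ⟨φ, Φ, ⟨hφ.contDiff, hφ.deriv_nonneg, hφ.le, fun x hx => ?_, ?_, fun x hx => ?_⟩,
    fun r hr => hφ.eq_mul r ⟨hr.1, hr.2.trans (le_max_left _ _)⟩⟩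
  · refine half_le_carlemanCoefficient (min_le_left _ _)
      ((le_div_iff₀ (by positivity)).1 (min_le_right _ _)) hφ ?_
    rcases le_total ‖x‖ ρ with hxρ | hxρ
    · rw [hφ.deriv_eq _ ⟨norm_nonneg x, hxρ.trans (le_max_right _ _)⟩]
      linarith [hB x hx]
    · exact (hρ hxρ).trans (le_add_of_nonneg_right (sq_nonneg _))
  · refine le_trans ?_ (le_mul_of_one_le_right (by positivity) hτ_sq)
    linarith [sq_nonneg (1 + m / a)]
  · have hslope : (deriv φ ‖x‖ + m / ‖x‖) ^ 2 ≤ ((1 + m / a) * τ) ^ 2 := by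
      have := hφ.deriv_nonneg ‖x‖
      gcongr
      calc deriv φ ‖x‖ + m / ‖x‖ ≤ τ + m / a := by gcongr; exact hφ.deriv_le _
        _ ≤ (1 + m / a) * τ := by nlinarith [div_nonneg hm ha.le]
    have hconst : lam + C ≤ (lam + C) * τ ^ 2 := le_mul_of_one_le_right (by positivity) hτ_sq
    linarith [abs_carlemanPotential_le hlam.le hφ (hV x hx)]

end WeightExistence

section RealSolutions

lemma nonpos_of_eventually_exp_mul_le {s J D : ℝ} {k : ℕ} (hs : 0 < s)
    (h : ∀ᶠ τ in atTop, Real.exp (s * τ) * J ≤ D * τ ^ k) : J ≤ 0 := by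
  have hlim : Tendsto (fun τ : ℝ => D * (τ ^ k / Real.exp (s * τ))) atTop (𝓝 (D * 0)) :=
    (isLittleO_pow_exp_pos_mul_atTop k hs).tendsto_div_nhds_zero.const_mul D
  rw [mul_zero] at hlim
  refine ge_of_tendsto hlim (h.mono fun τ hτ => ?_)
  rwa [← mul_div_assoc, le_div_iff₀' (Real.exp_pos _)]

variable {E : Type*} [NormedAddCommGroup E] [InnerProductSpace ℝ E] [FiniteDimensional ℝ E]
  {R m lam a c : ℝ} {V u : E → ℝ}

lemma exists_forall_exterior_abs_le {f : E → ℝ} (hRa : R < a)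
    (hf : ContinuousOn f {x | R < ‖x‖}) (hlim : Tendsto f (cobounded E) (𝓝 0)) :
    ∃ C, 0 ≤ C ∧ ∀ x, a ≤ ‖x‖ → |f x| ≤ C := by
  obtain ⟨ρ, -, hρ⟩ := (hasBasis_cobounded_norm (E := E)).eventually_iff.1
    (hlim.abs.eventually_le_const (show |(0 : ℝ)| < 1 by simp))
  obtain ⟨C, hC⟩ := (isCompact_shell (E := E) a ρ).exists_bound_of_continuousOn
    (hf.mono fun x hx => hRa.trans_le hx.1)
  refine ⟨max 1 C, le_max_of_le_left zero_le_one, fun x hx => ?_⟩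
  rcases le_total ‖x‖ ρ with hxρ | hxρ
  · exact (hC x ⟨hx, hxρ⟩).trans (le_max_right _ _)
  · exact (hρ hxρ).trans (le_max_left _ _)

lemma tendsto_carlemanDefect (hV : Tendsto V (cobounded E) (𝓝 0))
    (hV' : Tendsto (fun x => ⟪∇ V x, x⟫) (cobounded E) (𝓝 0)) :
    Tendsto (carlemanDefect m V) (cobounded E) (𝓝 0) := by
  have hinv : Tendsto (fun x : E => m * (m - 1) / ‖x‖) (cobounded E) (𝓝 0) :=
    tendsto_norm_cobounded_atTop.const_div_atTop _
  have hsum := (hV.add hV').add ((hinv.pow 2).const_mul 2)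
  rwa [zero_pow two_ne_zero, mul_zero, add_zero, add_zero] at hsum

namespace IsExteriorSolution

lemma continuousOn_potential (hu : IsExteriorSolution R lam V u) :
    ContinuousOn V {x | R < ‖x‖} :=
  fun x hx => (hu.contDiffAt_potential x hx).continuousAt.continuousWithinAt

lemma continuousOn_carlemanDefect (hR : 0 ≤ R) (hu : IsExteriorSolution R lam V u) :
    ContinuousOn (carlemanDefect m V) {x | R < ‖x‖} := by
  intro x hx
  have hV := hu.contDiffAt_potential x hx
  have hgrad : ContinuousAt (∇ V) x := (contDiffAt_gradient (n := 0) hV).continuousAt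
  have hinv : ContinuousAt (fun x : E => m * (m - 1) / ‖x‖) x :=
    continuousAt_const.div continuousAt_id.norm (hR.trans_lt hx).ne'
  exact ((hV.continuousAt.add (hgrad.inner continuousAt_id)).add
    ((hinv.pow 2).const_mul 2)).continuousWithinAt

variable [MeasurableSpace E] [BorelSpace E]

lemma integrableOn_norm_gradient_sq (hR : 0 ≤ R) (hRa : R < a)
    (hu : IsExteriorSolution R lam V u) (hint : IntegrableOn (fun x => u x ^ 2) {x | R < ‖x‖})
    (hV : Tendsto V (cobounded E) (𝓝 0)) :
    IntegrableOn (fun x => ‖∇ u x‖ ^ 2) {x | a ≤ ‖x‖} := by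
  obtain ⟨R', hRR', hR'a⟩ := exists_between hRa
  obtain ⟨C, hC, hVC⟩ := exists_forall_exterior_abs_le hRR' hu.continuousOn_potential hV
  refine _root_.integrableOn_norm_gradient_sq (C := |lam| + C) (hR.trans hRR'.le) hR'a
    (fun x hx => hu.contDiffAt x (hRR'.trans hx)) (hint.mono_set fun x hx => hRR'.trans hx)
    (by positivity) fun x hx => ?_
  have hcoeff : lam - V x ≤ |lam| + C := by
    linarith [le_abs_self lam, neg_le_of_abs_le (hVC x hx.le)]
  calc -(u x * Δ u x) = (lam - V x) * u x ^ 2 := by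
        rw [hu.laplacian_eq x (hRR'.trans hx)]
        ring
    _ ≤ (|lam| + C) * u x ^ 2 := by gcongr

theorem setIntegral_sq_nonpos (hm : (finrank ℝ E : ℝ) = 2 * m + 1) (hm₀ : 0 ≤ m) (hR : 0 ≤ R)
    (hRc : R < c) (hlam : 0 < lam) (hu : IsExteriorSolution R lam V u)
    (hint : IntegrableOn (fun x => u x ^ 2) {x | R < ‖x‖})
    (hV : Tendsto V (cobounded E) (𝓝 0))
    (hV' : Tendsto (fun x => ⟪∇ V x, x⟫) (cobounded E) (𝓝 0)) :
    ∫ x in {x | c ≤ ‖x‖}, u x ^ 2 ≤ 0 := by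
  obtain ⟨b, hRb, hbc⟩ := exists_between hRc
  obtain ⟨a, hRa, hab⟩ := exists_between hRb
  have ha : 0 < a := hR.trans_lt hRa
  obtain ⟨C, hC, hVC⟩ := exists_forall_exterior_abs_le hRa hu.continuousOn_potential hV
  have hdefect := tendsto_carlemanDefect (m := m) hV hV'
  obtain ⟨B, -, hB⟩ := exists_forall_exterior_abs_le hRa (hu.continuousOn_carlemanDefect hR) hdefect
  obtain ⟨A, hA⟩ := exists_isRadialCutoff ha.le hab
  have hgrad := hu.integrableOn_norm_gradient_sq hR hRa hint hV
  set I := ∫ x in {x | a ≤ ‖x‖}, (‖∇ u x‖ ^ 2 + u x ^ 2)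
  set K := 2 + 2 * (1 + m / a) ^ 2 + (1 + lam + C)
  refine nonpos_of_eventually_exp_mul_le (s := 2 * (c - b)) (D := A * K * I / (lam / 2)) (k := 2)
    (by linarith) ?_
  filter_upwards [eventually_ge_atTop 1, (tendsto_pow_atTop two_ne_zero).eventually_ge_atTop B]
    with τ hτ hBτ
  obtain ⟨φ, Φ, hφ, hφτ⟩ := exists_isCarlemanWeight hm₀ hlam ha hC hVC
    (fun x hx => le_of_abs_le (hB x hx)) hdefect hτ hBτ c
  have hest := exp_mul_setIntegral_sq_le hm hR hRa hab.le hbc.le (half_pos hlam).le hu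
    (hint.mono_set fun x hx => hRa.trans_le hx) hgrad hφ hA
  rw [hφτ b ⟨(ha.trans hab).le, hbc.le⟩, hφτ c ⟨(hR.trans_lt hRc).le, le_rfl⟩,
    show 2 * (τ * c) = 2 * (c - b) * τ + 2 * (τ * b) by ring, Real.exp_add] at hest
  rw [div_mul_eq_mul_div, le_div_iff₀' (half_pos hlam)]
  refine le_of_mul_le_mul_right ?_ (Real.exp_pos (2 * (τ * b)))
  linarith

theorem eq_zero [Nontrivial E] (hR : 0 ≤ R) (hlam : 0 < lam) (hu : IsExteriorSolution R lam V u)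
    (hint : IntegrableOn (fun x => u x ^ 2) {x | R < ‖x‖})
    (hV : Tendsto V (cobounded E) (𝓝 0))
    (hV' : Tendsto (fun x => ⟪∇ V x, x⟫) (cobounded E) (𝓝 0)) {x : E} (hx : R < ‖x‖) :
    u x = 0 := by
  obtain ⟨c, hRc, hcx⟩ := exists_between hx
  have hdim : (1 : ℝ) ≤ finrank ℝ E := mod_cast finrank_pos (R := ℝ) (M := E)
  have hzero : ∫ x in {x | c ≤ ‖x‖}, u x ^ 2 = 0 := le_antisymm
    (hu.setIntegral_sq_nonpos (m := (finrank ℝ E - 1) / 2) (by ring) (by linarith) hR hRc hlam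
      hint hV hV') (integral_nonneg fun x => sq_nonneg _)
  have hae : (fun x => u x ^ 2) =ᵐ[volume.restrict {x | c < ‖x‖}] fun _ => 0 :=
    ae_restrict_of_ae_restrict_of_subset (fun x (hx : c < ‖x‖) => hx.le)
      ((integral_eq_zero_iff_of_nonneg (fun x => sq_nonneg _)
        (hint.mono_set fun x hx => hRc.trans_le hx)).1 hzero)
  have hopen : IsOpen {x : E | c < ‖x‖} := isOpen_lt continuous_const continuous_norm
  exact pow_eq_zero_iff two_ne_zero |>.1 <| Measure.eqOn_open_of_ae_eq hae hopen
    (hu.continuousOn_sq.mono fun x hx => hRc.trans hx) continuousOn_const hcx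

end IsExteriorSolution

end RealSolutions

section VectorValued

variable {F : Type*} [NormedAddCommGroup F] [NormedSpace ℝ F]

lemma integrableOn_dual_comp_sq {X : Type*} [TopologicalSpace X] [MeasurableSpace X]
    [OpensMeasurableSpace X] {μ : Measure X} {s : Set X} (hs : MeasurableSet s) {ψ : X → F}
    (hψ : ContinuousOn ψ s) (hint : IntegrableOn (fun x => ‖ψ x‖ ^ 2) s μ) (ℓ : StrongDual ℝ F) :
    IntegrableOn (fun x => (ℓ ∘ ψ) x ^ 2) s μ := by
  refine (hint.const_mul (‖ℓ‖ ^ 2)).mono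
    (((ℓ.continuous.comp_continuousOn hψ).pow 2).aestronglyMeasurable hs)
    (Eventually.of_forall fun x => ?_)
  rw [norm_pow, ← mul_pow, norm_pow, norm_mul, norm_norm, norm_norm]
  gcongr
  exact ℓ.le_opNorm _

variable {E : Type*} [NormedAddCommGroup E] [InnerProductSpace ℝ E] [FiniteDimensional ℝ E]

lemma isExteriorSolution_dual_comp {R lam : ℝ} {V : E → ℝ} {ψ : E → F}
    (hV : ContDiffOn ℝ 1 V {x | R < ‖x‖}) (hψ : ContDiffOn ℝ 2 ψ {x | R < ‖x‖})
    (heq : ∀ x, R < ‖x‖ → -Δ ψ x + V x • ψ x = lam • ψ x) (ℓ : StrongDual ℝ F) :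
    IsExteriorSolution R lam V (ℓ ∘ ψ) := by
  have hopen : IsOpen {x : E | R < ‖x‖} := isOpen_lt continuous_const continuous_norm
  have hψx : ∀ x, R < ‖x‖ → ContDiffAt ℝ 2 ψ x := fun x hx =>
    hψ.contDiffAt (hopen.mem_nhds hx)
  refine ⟨fun x hx => hV.contDiffAt (hopen.mem_nhds hx), fun x hx =>
    ℓ.contDiff.contDiffAt.comp x (hψx x hx), fun x hx => ?_⟩
  have hlap : Δ ψ x = (V x - lam) • ψ x := by
    rw [sub_smul, ← heq x hx]
    abel
  simp [(hψx x hx).laplacian_CLM_comp_left, hlap]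

theorem stmt_13_general [MeasurableSpace E] [BorelSpace E] {R lam : ℝ} (hR : 0 ≤ R)
    (hlam : 0 < lam) {V : E → ℝ} {ψ : E → F}
    (hV : ContDiffOn ℝ 1 V {x | R < ‖x‖}) (hV₀ : Tendsto V (cobounded E) (𝓝 0))
    (hV₁ : Tendsto (fun x => fderiv ℝ V x x) (cobounded E) (𝓝 0))
    (hψ : ContDiffOn ℝ 2 ψ {x | R < ‖x‖})
    (hL2 : IntegrableOn (fun x => ‖ψ x‖ ^ 2) {x | R < ‖x‖})
    (heq : ∀ x, R < ‖x‖ → -Δ ψ x + V x • ψ x = lam • ψ x) :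
    ∀ x, R < ‖x‖ → ψ x = 0 := by
  intro x hx
  have : Nontrivial E := ⟨x, 0, norm_pos_iff.1 (hR.trans_lt hx)⟩
  have hmeas : MeasurableSet {x : E | R < ‖x‖} := measurableSet_lt measurable_const measurable_norm
  simp_rw [← inner_gradient_left] at hV₁
  exact SeparatingDual.eq_zero_of_forall_dual_eq_zero (R := ℝ) fun ℓ =>
    (isExteriorSolution_dual_comp hV hψ heq ℓ).eq_zero hR hlam
      (integrableOn_dual_comp_sq hmeas hψ.continuousOn hL2 ℓ) hV₀ hV₁ hx

end VectorValued

section Symbols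

variable {E : Type*} [NormedAddCommGroup E] [NormedSpace ℝ E] {V : E → ℝ} {δ R C : ℝ}

lemma tendsto_norm_pow_mul_norm_iteratedFDeriv (hδ : 0 < δ) {k : ℕ}
    (hdecay : ∀ x, R < ‖x‖ → ‖iteratedFDeriv ℝ k V x‖ ≤ C * (1 + ‖x‖) ^ (-(δ + (k : ℝ)))) :
    Tendsto (fun x => ‖x‖ ^ k * ‖iteratedFDeriv ℝ k V x‖) (cobounded E) (𝓝 0) := by
  have hlim : Tendsto (fun x : E => |C| * (1 + ‖x‖) ^ (-δ)) (cobounded E) (𝓝 0) := by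
    simpa using ((tendsto_rpow_neg_atTop hδ).comp
      (tendsto_atTop_add_const_left _ 1 tendsto_norm_cobounded_atTop)).const_mul |C|
  refine squeeze_zero' (Eventually.of_forall fun x => by positivity) ?_ hlim
  filter_upwards [tendsto_norm_cobounded_atTop.eventually_gt_atTop R] with x hx
  calc ‖x‖ ^ k * ‖iteratedFDeriv ℝ k V x‖
      ≤ (1 + ‖x‖) ^ k * (|C| * (1 + ‖x‖) ^ (-(δ + (k : ℝ)))) := by
        gcongr
        · linarith
        · exact (hdecay x hx).trans (by gcongr; exact le_abs_self C)
    _ = |C| * (1 + ‖x‖) ^ (-δ) := by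
        rw [mul_left_comm, ← Real.rpow_natCast, ← Real.rpow_add (by positivity)]
        ring_nf

lemma tendsto_of_symbol_decay_zero (hδ : 0 < δ)
    (hdecay : ∀ x, R < ‖x‖ → ‖iteratedFDeriv ℝ 0 V x‖ ≤ C * (1 + ‖x‖) ^ (-(δ + ((0 : ℕ) : ℝ)))) :
    Tendsto V (cobounded E) (𝓝 0) := by
  refine tendsto_zero_iff_norm_tendsto_zero.2 ?_
  simpa using tendsto_norm_pow_mul_norm_iteratedFDeriv hδ hdecay

lemma tendsto_fderiv_apply_self_of_symbol_decay_one (hδ : 0 < δ)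
    (hdecay : ∀ x, R < ‖x‖ → ‖iteratedFDeriv ℝ 1 V x‖ ≤ C * (1 + ‖x‖) ^ (-(δ + ((1 : ℕ) : ℝ)))) :
    Tendsto (fun x => fderiv ℝ V x x) (cobounded E) (𝓝 0) := by
  refine squeeze_zero_norm (fun x => ?_) (tendsto_norm_pow_mul_norm_iteratedFDeriv hδ hdecay)
  rw [pow_one, norm_iteratedFDeriv_one, mul_comm]
  exact (fderiv ℝ V x).le_opNorm x

end Symbols

lemma lap_eq_laplacian {n : ℕ} {f : EuclideanSpace ℝ (Fin n) → ℂ} {x : EuclideanSpace ℝ (Fin n)}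
    (hf : ContDiffAt ℝ 2 f x) : lap f x = Δ f x := by
  have hfderiv : DifferentiableAt ℝ (fderiv ℝ f) x :=
    (hf.fderiv_right (m := 1) le_rfl).differentiableAt one_ne_zero
  rw [lap, laplacian_eq_iteratedFDeriv_orthonormalBasis f (EuclideanSpace.basisFun (Fin n) ℝ)]
  refine Finset.sum_congr rfl fun i _ => ?_
  rw [fderiv_clm_apply hfderiv (differentiableAt_const _)]
  simp [iteratedFDeriv_two_apply]

/-- Euclidean instance of Corollary 5.4 on an exterior region: if the eigenvalue
equation `-Δψ + Vψ = λψ`, `λ > 0`, holds only on `Ω = {|x| > R₁}`, with `V` of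
symbolic decay order `-δ` on `Ω` and `ψ` smooth and square integrable on `Ω`, then
`ψ ≡ 0` on `Ω`. -/
theorem stmt_13 (n : ℕ) (hn : 2 ≤ n) (δ R₁ : ℝ) (hδ : 0 < δ) (hR₁ : 0 < R₁)
    (V : EuclideanSpace ℝ (Fin n) → ℝ)
    (ψ : EuclideanSpace ℝ (Fin n) → ℂ)
    (hV : ContDiffOn ℝ (⊤ : ℕ∞) V {x | R₁ < ‖x‖})
    (hdecay : ∀ k : ℕ, ∃ C : ℝ, ∀ x, R₁ < ‖x‖ →
      ‖iteratedFDeriv ℝ k V x‖ ≤ C * (1 + ‖x‖) ^ (-(δ + (k:ℝ))))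
    (lam : ℝ) (hlam : 0 < lam)
    (hψ : ContDiffOn ℝ (⊤ : ℕ∞) ψ {x | R₁ < ‖x‖})
    (hL2 : IntegrableOn (fun x => ‖ψ x‖^2) {x : EuclideanSpace ℝ (Fin n) | R₁ < ‖x‖})
    (heq : ∀ x, R₁ < ‖x‖ → -lap ψ x + (V x : ℂ) * ψ x = (lam : ℂ) * ψ x) :
    ∀ x, R₁ < ‖x‖ → ψ x = 0 := by
  obtain ⟨C₀, hC₀⟩ := hdecay 0
  obtain ⟨C₁, hC₁⟩ := hdecay 1
  have hψ₂ : ContDiffOn ℝ 2 ψ {x | R₁ < ‖x‖} := hψ.of_le (by norm_cast)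
  have hopen : IsOpen {x : EuclideanSpace ℝ (Fin n) | R₁ < ‖x‖} :=
    isOpen_lt continuous_const continuous_norm
  refine stmt_13_general hR₁.le hlam (hV.of_le (by norm_cast))
    (tendsto_of_symbol_decay_zero hδ hC₀) (tendsto_fderiv_apply_self_of_symbol_decay_one hδ hC₁)
    hψ₂ hL2 fun x hx => ?_
  rw [← lap_eq_laplacian (hψ₂.contDiffAt (hopen.mem_nhds hx)), Complex.real_smul,
    Complex.real_smul, heq x hx]
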